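/- For any causal curve γ: [a,b] → I×X, L_τ(γ) = τ(γ), where L_τ(γ) = inf{Σ_{i=1}^N τ(γ_{t_{i−1}}, γ_{t_i}) : a = t_0 < ⋯ < t_N = b} is the variational Lorentzian length associated to the time separation function τ. -/

import Mathlib

open Filter MeasureTheory Set Topology
open scoped ENNReal NNReal

noncomputable section

/-- The metric speed of a curve `β` at time `t` w.r.t. a distance function `dist`. -/
def mSpeed {X : Type*} (dst : X → X → ℝ) (β : ℝ → X) (t : ℝ) : ℝ :=
  Filter.limsup (fun e : ℝ => dst (β (t + e)) (β t) / |e|) (nhdsWithin (0 : ℝ) {0}ᶜ)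

/-- The generalized metric speed `v_β(s,t)` of a curve `β` w.r.t. the family of
metrics `d`. -/
def genSpeed {X : Type*} (d : ℝ → X → X → ℝ) (β : ℝ → X) (s t : ℝ) : ℝ :=
  Filter.limsup (fun e : ℝ => (∫ u in t..(t + e), mSpeed (d s) β u) / e)
    (nhdsWithin (0 : ℝ) {0}ᶜ)

/-- Absolute continuity of a curve on `[a,b]` w.r.t. a distance function. -/
def ACOn {X : Type*} (dst : X → X → ℝ) (β : ℝ → X) (a b : ℝ) : Prop :=
  ∃ g : ℝ → ℝ, MeasureTheory.IntegrableOn g (Set.Icc a b) ∧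
    ∀ ⦃t u : ℝ⦄, t ∈ Set.Icc a b → u ∈ Set.Icc a b → t ≤ u →
      dst (β t) (β u) ≤ ∫ r in t..u, g r

/-- The standard distance on `ℝ`. -/
def rdist : ℝ → ℝ → ℝ := fun x y => |x - y|

/-- `d` is a family of metrics on `X` indexed by `s ∈ I`, each generating the
topology of `X`. -/
def IsMetricFamily {X : Type*} [TopologicalSpace X] (I : Set ℝ) (d : ℝ → X → X → ℝ) : Prop :=
  ∀ s ∈ I,
    (∀ x : X, d s x x = 0) ∧ (∀ x y : X, x ≠ y → 0 < d s x y) ∧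
    (∀ x y : X, d s x y = d s y x) ∧ (∀ x y z : X, d s x z ≤ d s x y + d s y z) ∧
    (∀ x : X, (nhds x).HasBasis (fun ε : ℝ => 0 < ε) (fun ε => {y | d s x y < ε}))

/-- Condition (C): local uniform continuity of `s ↦ d_s` in a logarithmic sense. -/
def CondC {X : Type*} [TopologicalSpace X] (I : Set ℝ) (d : ℝ → X → X → ℝ) : Prop :=
  ∀ J : Set ℝ, ∀ K : Set X, J ⊆ I → IsCompact J → IsCompact K →
    ∃ r > (0 : ℝ), ∃ ω : ℝ → ℝ, ω 0 = 0 ∧ Monotone ω ∧ ContinuousAt ω 0 ∧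
      ∀ s ∈ J, ∀ s' ∈ J, ∀ x ∈ K, ∀ y ∈ K, x ≠ y →
        sInf ((fun u => d u x y) '' J) < r →
        |Real.log (d s x y / d s' x y)| ≤ ω |s - s'|

/-- Condition (L): local log-Lipschitz dependence of `d_s` on `s`. -/
def CondL {X : Type*} [TopologicalSpace X] (I : Set ℝ) (d : ℝ → X → X → ℝ) : Prop :=
  ∀ J : Set ℝ, ∀ K : Set X, J ⊆ I → IsCompact J → IsCompact K →
    ∃ C > (0 : ℝ), ∃ r > (0 : ℝ),
      ∀ s ∈ J, ∀ s' ∈ J, ∀ x ∈ K, ∀ y ∈ K, x ≠ y →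
        sInf ((fun u => d u x y) '' J) < r →
        |Real.log (d s x y / d s' x y)| ≤ C * |s - s'|

/-- Condition (H): Lipschitz continuity of `h` in the time variable, locally
uniformly. -/
def CondH {X : Type*} [TopologicalSpace X] (I : Set ℝ) (h : ℝ → X → ℝ) : Prop :=
  ∀ J : Set ℝ, ∀ K : Set X, J ⊆ I → IsCompact J → IsCompact K →
    ∃ C' > (0 : ℝ), ∀ s ∈ J, ∀ s' ∈ J, ∀ x ∈ K, |h s x - h s' x| ≤ C' * |s - s'|

/-- A curve `(α, β) : [a,b] → I × X` with both components absolutely continuous. -/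
def CurveIn {X : Type*} (I : Set ℝ) (d : ℝ → X → X → ℝ) (α : ℝ → ℝ) (β : ℝ → X)
    (a b : ℝ) : Prop :=
  a < b ∧ ACOn rdist α a b ∧ (∀ s ∈ I, ACOn (d s) β a b) ∧ ∀ t ∈ Set.Icc a b, α t ∈ I

/-- Future directed: `α' > 0` a.e. -/
def FutureDirected (α : ℝ → ℝ) (a b : ℝ) : Prop :=
  ∀ᵐ t : ℝ, t ∈ Set.Ioo a b → 0 < deriv α t

/-- Past directed: `α' < 0` a.e. -/
def PastDirected (α : ℝ → ℝ) (a b : ℝ) : Prop :=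
  ∀ᵐ t : ℝ, t ∈ Set.Ioo a b → deriv α t < 0

/-- The causality inequality `v_β(α_t,t)² ≤ h(γ_t)² α'(t)²` a.e. -/
def CausalIneq {X : Type*} (d : ℝ → X → X → ℝ) (h : ℝ → X → ℝ) (α : ℝ → ℝ)
    (β : ℝ → X) (a b : ℝ) : Prop :=
  ∀ᵐ t : ℝ, t ∈ Set.Ioo a b →
    (genSpeed d β (α t) t) ^ 2 ≤ (h (α t) (β t)) ^ 2 * (deriv α t) ^ 2

/-- The timelike inequality `v_β(α_t,t)² < h(γ_t)² α'(t)²` a.e. -/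
def TimelikeIneq {X : Type*} (d : ℝ → X → X → ℝ) (h : ℝ → X → ℝ) (α : ℝ → ℝ)
    (β : ℝ → X) (a b : ℝ) : Prop :=
  ∀ᵐ t : ℝ, t ∈ Set.Ioo a b →
    (genSpeed d β (α t) t) ^ 2 < (h (α t) (β t)) ^ 2 * (deriv α t) ^ 2

/-- Future directed causal curve. -/
def FutureCausal {X : Type*} (I : Set ℝ) (d : ℝ → X → X → ℝ) (h : ℝ → X → ℝ)
    (α : ℝ → ℝ) (β : ℝ → X) (a b : ℝ) : Prop :=
  CurveIn I d α β a b ∧ FutureDirected α a b ∧ CausalIneq d h α β a b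

/-- Future directed timelike curve. -/
def FutureTimelike {X : Type*} (I : Set ℝ) (d : ℝ → X → X → ℝ) (h : ℝ → X → ℝ)
    (α : ℝ → ℝ) (β : ℝ → X) (a b : ℝ) : Prop :=
  CurveIn I d α β a b ∧ FutureDirected α a b ∧ TimelikeIneq d h α β a b

/-- Causal curve (future or past directed). -/
def CausalCurve {X : Type*} (I : Set ℝ) (d : ℝ → X → X → ℝ) (h : ℝ → X → ℝ)
    (α : ℝ → ℝ) (β : ℝ → X) (a b : ℝ) : Prop :=
  CurveIn I d α β a b ∧ (FutureDirected α a b ∨ PastDirected α a b) ∧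
    CausalIneq d h α β a b

/-- The causal relation `p ≤ q` in the generalized Lorentzian product. -/
def causalRel {X : Type*} (I : Set ℝ) (d : ℝ → X → X → ℝ) (h : ℝ → X → ℝ)
    (p q : ℝ × X) : Prop :=
  ∃ a b α β, FutureCausal I d h α β a b ∧
    α a = p.1 ∧ β a = p.2 ∧ α b = q.1 ∧ β b = q.2

/-- The chronological relation `p ≪ q` in the generalized Lorentzian product. -/
def chronRel {X : Type*} (I : Set ℝ) (d : ℝ → X → X → ℝ) (h : ℝ → X → ℝ)
    (p q : ℝ × X) : Prop :=
  ∃ a b α β, FutureTimelike I d h α β a b ∧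
    α a = p.1 ∧ β a = p.2 ∧ α b = q.1 ∧ β b = q.2

/-- The Lorentzian length of a curve. -/
def lorLen {X : Type*} (d : ℝ → X → X → ℝ) (h : ℝ → X → ℝ) (α : ℝ → ℝ) (β : ℝ → X)
    (a b : ℝ) : ℝ :=
  ∫ t in a..b,
    Real.sqrt ((h (α t) (β t)) ^ 2 * (deriv α t) ^ 2 - (genSpeed d β (α t) t) ^ 2)

/-- The time separation function `τ` of the generalized Lorentzian product. -/
def timeSep {X : Type*} (I : Set ℝ) (d : ℝ → X → X → ℝ) (h : ℝ → X → ℝ)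
    (p q : ℝ × X) : ℝ≥0∞ :=
  sSup {l | ∃ a b α β, FutureCausal I d h α β a b ∧
    α a = p.1 ∧ β a = p.2 ∧ α b = q.1 ∧ β b = q.2 ∧
    l = ENNReal.ofReal (lorLen d h α β a b)}

end

noncomputable section

open Filter MeasureTheory Set Topology
open scoped ENNReal

/-- The variational Lorentzian length `L_τ(γ)`: the infimum over partitions
`a = t₀ < ⋯ < t_N = b` of `Σ τ(γ(t_{i-1}), γ(t_i))`. -/
def varLength {X : Type*} (I : Set ℝ) (d : ℝ → X → X → ℝ) (h : ℝ → X → ℝ)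
    (α : ℝ → ℝ) (β : ℝ → X) (a b : ℝ) : ℝ≥0∞ :=
  sInf {l : ℝ≥0∞ | ∃ N : ℕ, 0 < N ∧ ∃ t : ℕ → ℝ, t 0 = a ∧ t N = b ∧
    (∀ i < N, t i < t (i + 1)) ∧
    l = ∑ i ∈ Finset.range N,
      timeSep I d h (α (t i), β (t i)) (α (t (i + 1)), β (t (i + 1)))}

/-! ### Intervals shrinking to a point -/

/-- The filter of nondegenerate intervals `[p.1, p.2]` containing `t` and shrinking to `t`. -/
def straddle (t : ℝ) : Filter (ℝ × ℝ) :=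
  (𝓝[≤] t ×ˢ 𝓝[≥] t) ⊓ 𝓟 {p | p.1 < p.2}

theorem tendsto_straddle_iff {ι : Type*} {l : Filter ι} {p : ι → ℝ × ℝ} {t : ℝ} :
    Tendsto p l (straddle t) ↔
      Tendsto (fun i => (p i).1) l (𝓝 t) ∧ Tendsto (fun i => (p i).2) l (𝓝 t) ∧
        ∀ᶠ i in l, (p i).1 ≤ t ∧ t ≤ (p i).2 ∧ (p i).1 < (p i).2 := by
  simp only [straddle, tendsto_inf, tendsto_principal, tendsto_prod_iff', nhdsWithin, mem_Iic,
    mem_Ici, eventually_and, mem_ofPred_eq]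
  tauto

theorem tendsto_fst_straddle (t : ℝ) : Tendsto Prod.fst (straddle t) (𝓝 t) :=
  (tendsto_straddle_iff.1 tendsto_id).1

theorem tendsto_snd_straddle (t : ℝ) : Tendsto Prod.snd (straddle t) (𝓝 t) :=
  (tendsto_straddle_iff.1 tendsto_id).2.1

theorem eventually_straddle (t : ℝ) :
    ∀ᶠ p in straddle t, p.1 ≤ t ∧ t ≤ p.2 ∧ p.1 < p.2 :=
  (tendsto_straddle_iff.1 tendsto_id).2.2

theorem eventually_straddle_mem {t : ℝ} {s : Set ℝ} (hs : s ∈ 𝓝 t) :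
    ∀ᶠ p in straddle t, p.1 ∈ s ∧ p.2 ∈ s :=
  ((tendsto_fst_straddle t).eventually hs).and ((tendsto_snd_straddle t).eventually hs)

theorem tendsto_min_max_straddle (t : ℝ) :
    Tendsto (fun e : ℝ => (min t (t + e), max t (t + e))) (𝓝[≠] 0) (straddle t) := by
  have h0 : Tendsto (fun e : ℝ => t + e) (𝓝[≠] 0) (𝓝 t) := by
    have : Tendsto (fun e : ℝ => t + e) (𝓝 0) (𝓝 (t + 0)) := tendsto_const_nhds.add tendsto_id
    rw [add_zero] at this
    exact this.mono_left nhdsWithin_le_nhds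
  refine tendsto_straddle_iff.2 ⟨?_, ?_, ?_⟩
  · simpa using (tendsto_const_nhds (x := t)).min h0
  · simpa using (tendsto_const_nhds (x := t)).max h0
  · filter_upwards [self_mem_nhdsWithin] with e he
    refine ⟨min_le_left _ _, le_max_left _ _, ?_⟩
    rw [min_lt_max]
    simpa [eq_comm] using he

instance straddle_neBot (t : ℝ) : (straddle t).NeBot :=
  (tendsto_min_max_straddle t).neBot

theorem HasDerivAt.tendsto_straddle {f : ℝ → ℝ} {f' t : ℝ} (hf : HasDerivAt f f' t) :
    Tendsto (fun p : ℝ × ℝ => (f p.2 - f p.1) / (p.2 - p.1)) (straddle t) (𝓝 f') := by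
  rw [hasDerivAt_iff_isLittleO] at hf
  rw [Metric.tendsto_nhds]
  intro ε hε
  have h1 := hf.def (half_pos hε)
  filter_upwards [(tendsto_fst_straddle t).eventually h1, (tendsto_snd_straddle t).eventually h1,
    eventually_straddle t] with p hp1 hp2 ⟨h3, h4, h5⟩
  simp only [Real.norm_eq_abs, smul_eq_mul] at hp1 hp2
  rw [abs_of_nonpos (sub_nonpos.2 h3)] at hp1
  rw [abs_of_nonneg (sub_nonneg.2 h4)] at hp2
  have h6 : 0 < p.2 - p.1 := sub_pos.2 h5
  rw [Real.dist_eq, div_sub' h6.ne', abs_div, abs_of_pos h6, div_lt_iff₀ h6]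
  have : f p.2 - f p.1 - (p.2 - p.1) * f' =
      (f p.2 - f t - (p.2 - t) * f') - (f p.1 - f t - (p.1 - t) * f') := by ring
  rw [this]
  have h7 := abs_sub (f p.2 - f t - (p.2 - t) * f') (f p.1 - f t - (p.1 - t) * f')
  nlinarith

/-! ### Integrals over intervals, with hypotheses on the open interval -/

theorem ae_restrict_Ioc_of_Ioo {a b : ℝ} {P : ℝ → Prop}
    (h : ∀ᵐ t : ℝ, t ∈ Ioo a b → P t) : ∀ᵐ t ∂volume.restrict (Ioc a b), P t := by
  rw [← restrict_Ioo_eq_restrict_Ioc]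
  exact (ae_restrict_iff' measurableSet_Ioo).2 h

theorem integral_mono_Ioo {a b : ℝ} {f g : ℝ → ℝ} (hab : a ≤ b)
    (hf : IntervalIntegrable f volume a b) (hg : IntervalIntegrable g volume a b)
    (h : ∀ᵐ t : ℝ, t ∈ Ioo a b → f t ≤ g t) : ∫ t in a..b, f t ≤ ∫ t in a..b, g t := by
  rw [intervalIntegral.integral_of_le hab, intervalIntegral.integral_of_le hab]
  exact integral_mono_ae hf.1 hg.1 (ae_restrict_Ioc_of_Ioo h)

theorem integral_congr_Ioo {a b : ℝ} {f g : ℝ → ℝ} (hab : a ≤ b)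
    (h : ∀ᵐ t : ℝ, t ∈ Ioo a b → f t = g t) : ∫ t in a..b, f t = ∫ t in a..b, g t := by
  rw [intervalIntegral.integral_of_le hab, intervalIntegral.integral_of_le hab]
  exact integral_congr_ae (ae_restrict_Ioc_of_Ioo h)

theorem intervalIntegrable_of_abs_le {a b : ℝ} {f g : ℝ → ℝ} (hab : a ≤ b)
    (hg : IntervalIntegrable g volume a b) (hf : AEMeasurable f (volume.restrict (Ioc a b)))
    (h : ∀ᵐ t : ℝ, t ∈ Ioo a b → |f t| ≤ g t) : IntervalIntegrable f volume a b := by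
  refine hg.mono_fun' ?_ ?_
  · rw [uIoc_of_le hab]; exact hf.aestronglyMeasurable
  · rw [uIoc_of_le hab]; exact ae_restrict_Ioc_of_Ioo h

theorem intervalIntegrable_mono_Icc {a b c e : ℝ} {f : ℝ → ℝ}
    (hf : IntervalIntegrable f volume a b) (hac : a ≤ c) (hce : c ≤ e) (heb : e ≤ b) :
    IntervalIntegrable f volume c e :=
  hf.mono_set (by
    rw [uIcc_of_le hce, uIcc_of_le (hac.trans (hce.trans heb))]; exact Icc_subset_Icc hac heb)

/-! ### Absolutely continuous curves -/

/-- The axioms of a metric that matter for the length of curves. -/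
structure IsPseudoDist {X : Type*} (dst : X → X → ℝ) : Prop where
  self : ∀ x, dst x x = 0
  symm : ∀ x y, dst x y = dst y x
  tri : ∀ x y z, dst x z ≤ dst x y + dst y z

theorem IsPseudoDist.nonneg {X : Type*} {dst : X → X → ℝ} (hd : IsPseudoDist dst) (x y : X) :
    0 ≤ dst x y := by
  have := hd.tri x y x
  rw [hd.self, hd.symm y x] at this
  linarith

theorem IsPseudoDist.abs_sub_le {X : Type*} {dst : X → X → ℝ} (hd : IsPseudoDist dst)
    (z x y : X) : |dst z x - dst z y| ≤ dst x y := by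
  rw [abs_le]
  have h1 := hd.tri z x y
  have h2 := hd.tri z y x
  rw [hd.symm y x] at h2
  constructor <;> linarith

theorem ACOn.mono {X : Type*} {dst : X → X → ℝ} {β : ℝ → X} {a b c e : ℝ}
    (h : ACOn dst β a b) (hac : a ≤ c) (heb : e ≤ b) : ACOn dst β c e := by
  obtain ⟨g, hg, hb⟩ := h
  have hs : Icc c e ⊆ Icc a b := Icc_subset_Icc hac heb
  exact ⟨g, hg.mono_set hs, fun t u ht hu htu => hb (hs ht) (hs hu) htu⟩

theorem ACOn.comp_dist {X : Type*} {dst : X → X → ℝ} (hd : IsPseudoDist dst) {β : ℝ → X}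
    {a b : ℝ} (h : ACOn dst β a b) (z : X) : ACOn rdist (fun t => dst z (β t)) a b := by
  obtain ⟨g, hg, hb⟩ := h
  exact ⟨g, hg, fun t u ht hu htu => (hd.abs_sub_le z _ _).trans (hb ht hu htu)⟩

theorem ACOn.absolutelyContinuousOnInterval {φ : ℝ → ℝ} {a b : ℝ} (hab : a ≤ b)
    (h : ACOn rdist φ a b) : AbsolutelyContinuousOnInterval φ a b := by
  obtain ⟨g, hg, hb⟩ := h
  have hgi : IntervalIntegrable g volume a b :=
    (intervalIntegrable_iff_integrableOn_Icc_of_le hab).2 hg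
  have hG := hgi.absolutelyContinuousOnInterval_intervalIntegral (c := a) (by simp)
  have key : ∀ t ∈ Icc a b, ∀ u ∈ Icc a b,
      dist (φ t) (φ u) ≤ dist (∫ v in a..t, g v) (∫ v in a..u, g v) := by
    have : ∀ t ∈ Icc a b, ∀ u ∈ Icc a b, t ≤ u →
        dist (φ t) (φ u) ≤ dist (∫ v in a..t, g v) (∫ v in a..u, g v) := by
      intro t ht u hu htu
      rw [dist_comm (∫ v in a..t, g v), Real.dist_eq, Real.dist_eq,
        intervalIntegral.integral_interval_sub_left
        (intervalIntegrable_mono_Icc hgi le_rfl hu.1 hu.2)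
        (intervalIntegrable_mono_Icc hgi le_rfl ht.1 ht.2)]
      exact (hb ht hu htu).trans (le_abs_self _)
    intro t ht u hu
    rcases le_total t u with h | h
    · exact this t ht u hu h
    · rw [dist_comm (φ t), dist_comm (∫ v in a..t, g v)]
      exact this u hu t ht h
  refine squeeze_zero'
    (Eventually.of_forall fun E => Finset.sum_nonneg fun _ _ => dist_nonneg) ?_ hG
  refine eventually_inf_principal.2 (Eventually.of_forall fun E hE => ?_)
  refine Finset.sum_le_sum fun i hi => ?_
  have := hE.1 i hi
  rw [uIcc_of_le hab] at this
  exact key _ this.1 _ this.2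

theorem ACOn.tendsto_dist {X : Type*} {dst : X → X → ℝ} (hd : IsPseudoDist dst) {β : ℝ → X}
    {a b : ℝ} (hab : a ≤ b) (h : ACOn dst β a b) {t : ℝ} (ht : t ∈ Icc a b) :
    Tendsto (fun u => dst (β t) (β u)) (𝓝[Icc a b] t) (𝓝 0) := by
  have := (h.comp_dist hd (β t)).absolutelyContinuousOnInterval hab |>.continuousOn
  rw [uIcc_of_le hab] at this
  have h1 := this t ht
  rw [ContinuousWithinAt, hd.self] at h1
  exact h1

/-- Existence of the metric derivative of an absolutely continuous curve, and its integral
bounds distances along the curve. -/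
theorem ACOn.exists_metric_deriv {X : Type*} {dst : X → X → ℝ} (hd : IsPseudoDist dst)
    {β : ℝ → X} {a b : ℝ} (hab : a < b) (h : ACOn dst β a b) :
    ∃ m : ℝ → ℝ, IntervalIntegrable m volume a b ∧
      (∀ t ∈ Icc a b, ∀ u ∈ Icc a b, t ≤ u → dst (β t) (β u) ≤ ∫ r in t..u, m r) ∧
      ∀ᵐ t : ℝ, t ∈ Ioo a b → 0 ≤ m t ∧
        Tendsto (fun p : ℝ × ℝ => dst (β p.1) (β p.2) / (p.2 - p.1)) (straddle t) (𝓝 (m t)) ∧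
        HasDerivAt (fun x => ∫ r in a..x, m r) (m t) t := by
  let Q := {q : ℚ // (q : ℝ) ∈ Icc a b}
  obtain ⟨q0, hq0⟩ := exists_rat_btwn hab
  have : Nonempty Q := ⟨⟨q0, hq0.1.le, hq0.2.le⟩⟩
  let φ : Q → ℝ → ℝ := fun q t => dst (β q.1) (β t)
  have hφ : ∀ q, AbsolutelyContinuousOnInterval (φ q) a b := fun q =>
    (h.comp_dist hd _).absolutelyContinuousOnInterval hab.le
  let m : ℝ → ℝ := fun t => ⨆ q : Q, |deriv (φ q) t|
  have hmeas : Measurable m :=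
    Measurable.iSup fun q => (measurable_deriv (φ q)).abs
  have hm0 : ∀ t, 0 ≤ m t := fun t => Real.iSup_nonneg fun q => abs_nonneg _
  obtain ⟨g, hg, hgb⟩ := id h
  have hgi : IntervalIntegrable g volume a b :=
    (intervalIntegrable_iff_integrableOn_Icc_of_le hab.le).2 hg
  have hIsub : ∀ {f : ℝ → ℝ}, IntervalIntegrable f volume a b → ∀ t ∈ Icc a b, ∀ u ∈ Icc a b,
      ∫ r in t..u, f r = (∫ r in a..u, f r) - ∫ r in a..t, f r := fun hf t ht u hu =>
    (intervalIntegral.integral_interval_sub_left (intervalIntegrable_mono_Icc hf le_rfl hu.1 hu.2)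
      (intervalIntegrable_mono_Icc hf le_rfl ht.1 ht.2)).symm
  have hdiff : ∀ᵐ t : ℝ, ∀ q, t ∈ Ioo a b → DifferentiableAt ℝ (φ q) t := by
    rw [ae_all_iff]
    intro q
    filter_upwards [(hφ q).ae_differentiableAt] with t ht h1
    exact ht (by rw [uIcc_of_le hab.le]; exact Ioo_subset_Icc_self h1)
  have hbound : ∀ᵐ t : ℝ, t ∈ Ioo a b → ∀ q, |deriv (φ q) t| ≤ g t := by
    filter_upwards [hdiff, hgi.ae_hasDerivAt_integral] with t h1 h2 ht q
    have h3 := ((h1 q ht).hasDerivAt.tendsto_straddle).abs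
    have h4 := (h2 (by rw [uIcc_of_le hab.le]; exact Ioo_subset_Icc_self ht) a
      (by simp)).tendsto_straddle
    refine le_of_tendsto_of_tendsto h3 h4 ?_
    filter_upwards [eventually_straddle t, eventually_straddle_mem (Icc_mem_nhds ht.1 ht.2)]
      with p ⟨_, _, h5⟩ ⟨h6, h7⟩
    have h8 : 0 < p.2 - p.1 := sub_pos.2 h5
    rw [abs_div, abs_of_pos h8, ← hIsub hgi _ h6 _ h7, abs_sub_comm]
    gcongr
    exact (hd.abs_sub_le _ _ _).trans (hgb h6 h7 h5.le)
  have hle : ∀ᵐ t : ℝ, t ∈ Ioo a b → ∀ q, |deriv (φ q) t| ≤ m t := by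
    filter_upwards [hbound] with t ht h1 q
    exact le_ciSup (f := fun q => |deriv (φ q) t|) ⟨g t, by rintro _ ⟨q, rfl⟩; exact ht h1 q⟩ q
  have hmi : IntervalIntegrable m volume a b := by
    refine intervalIntegrable_of_abs_le hab.le hgi hmeas.aemeasurable ?_
    filter_upwards [hbound] with t ht h1
    rw [abs_of_nonneg (hm0 t)]
    exact ciSup_le (ht h1)
  have hφm : ∀ q : Q, ∀ t ∈ Icc a b, ∀ u ∈ Icc a b, t ≤ u → φ q u - φ q t ≤ ∫ r in t..u, m r := by
    intro q t ht u hu htu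
    have hac : AbsolutelyContinuousOnInterval (φ q) t u := (hφ q).mono (by
      rw [uIcc_of_le htu, uIcc_of_le hab.le]; exact Icc_subset_Icc ht.1 hu.2)
    rw [← hac.integral_deriv_eq_sub]
    refine integral_mono_Ioo htu hac.intervalIntegrable_deriv
      (intervalIntegrable_mono_Icc hmi ht.1 htu hu.2) ?_
    filter_upwards [hle] with r hr h1
    exact (le_abs_self _).trans (hr ⟨ht.1.trans_lt h1.1, h1.2.trans_le hu.2⟩ q)
  have hlen : ∀ t ∈ Icc a b, ∀ u ∈ Icc a b, t ≤ u → dst (β t) (β u) ≤ ∫ r in t..u, m r := by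
    intro t ht u hu htu
    rcases htu.eq_or_lt with rfl | htu'
    · simp [hd.self]
    refine le_of_forall_pos_le_add fun ε hε => ?_
    have h1 := h.tendsto_dist hd hab.le ht
    have h2 : ∀ᶠ r in 𝓝[>] t, dst (β t) (β r) < ε / 2 := by
      have : 𝓝[>] t ≤ 𝓝[Icc a b] t := by
        rw [← nhdsWithin_Ioo_eq_nhdsGT htu']
        exact nhdsWithin_mono _ fun x hx => ⟨ht.1.trans hx.1.le, hx.2.le.trans hu.2⟩
      exact this (h1.eventually (gt_mem_nhds (half_pos hε)))
    obtain ⟨c, hc, hc'⟩ := (mem_nhdsGT_iff_exists_Ioo_subset' htu').1 h2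
    obtain ⟨q, hq1, hq2⟩ := exists_rat_btwn (lt_min hc htu')
    have hqm : (q : ℝ) ∈ Icc a b :=
      ⟨ht.1.trans hq1.le, (hq2.le.trans (min_le_right _ _)).trans hu.2⟩
    have h3 : dst (β t) (β q) < ε / 2 := hc' ⟨hq1, hq2.trans_le (min_le_left _ _)⟩
    have h4 := hφm ⟨q, hqm⟩ t ht u hu htu
    have h5 := hd.tri (β t) (β q) (β u)
    simp only [φ] at h4
    rw [hd.symm (β q) (β t)] at h4
    linarith
  refine ⟨m, hmi, hlen, ?_⟩
  filter_upwards [hdiff, hbound, hle, hmi.ae_hasDerivAt_integral] with t h1 h2 h3 h4 ht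
  have h5 := h4 (by rw [uIcc_of_le hab.le]; exact Ioo_subset_Icc_self ht) a (by simp)
  refine ⟨hm0 t, ?_, h5⟩
  have hev := (eventually_straddle t).and (eventually_straddle_mem (Icc_mem_nhds ht.1 ht.2))
  refine tendsto_order.2 ⟨fun c hc => ?_, fun c hc => ?_⟩
  · obtain ⟨q, hq⟩ := exists_lt_of_lt_ciSup hc
    filter_upwards [((h1 q ht).hasDerivAt.tendsto_straddle).abs.eventually (lt_mem_nhds hq), hev]
      with p hp ⟨⟨_, _, h6⟩, h7, h8⟩
    have h9 : 0 < p.2 - p.1 := sub_pos.2 h6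
    refine hp.trans_le ?_
    rw [abs_div, abs_of_pos h9, abs_sub_comm]
    gcongr
    exact hd.abs_sub_le _ _ _
  · filter_upwards [h5.tendsto_straddle.eventually (gt_mem_nhds hc), hev]
      with p hp ⟨⟨_, _, h6⟩, h7, h8⟩
    refine lt_of_le_of_lt ?_ hp
    have h9 : 0 < p.2 - p.1 := sub_pos.2 h6
    rw [← hIsub hmi _ h7 _ h8]
    gcongr
    exact hlen _ h7 _ h8 h6.le

/-! ### Step functions along equidistant partitions -/

/-- The left end point of the cell of the grid `a + ℤ w` that contains `t`. -/
def gridFloor (a w t : ℝ) : ℝ := a + ⌊(t - a) / w⌋ * w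

theorem gridFloor_le {a w t : ℝ} (hw : 0 < w) : gridFloor a w t ≤ t := by
  have := mul_le_mul_of_nonneg_right (Int.floor_le ((t - a) / w)) hw.le
  rw [div_mul_cancel₀ _ hw.ne'] at this
  unfold gridFloor
  linarith

theorem lt_gridFloor_add {a w t : ℝ} (hw : 0 < w) : t < gridFloor a w t + w := by
  have := mul_lt_mul_of_pos_right (Int.lt_floor_add_one ((t - a) / w)) hw
  rw [div_mul_cancel₀ _ hw.ne'] at this
  unfold gridFloor
  linarith

theorem measurable_gridFloor_comp (F : ℝ → ℝ → ℝ) (a w : ℝ) :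
    Measurable fun t => F (gridFloor a w t) (gridFloor a w t + w) := by
  have h1 : Measurable fun k : ℤ => F (a + k * w) (a + k * w + w) := measurable_from_top
  exact h1.comp (Int.measurable_floor.comp ((measurable_id.sub_const a).div_const w))

theorem gridFloor_eq {a w t : ℝ} (hw : 0 < w) {k : ℕ} (h1 : a + k * w ≤ t)
    (h2 : t < a + (k + 1 : ℕ) * w) : gridFloor a w t = a + k * w := by
  have : ⌊(t - a) / w⌋ = k := by
    rw [Int.floor_eq_iff]
    push_cast at h2 ⊢
    constructor
    · rw [le_div_iff₀ hw]; linarith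
    · rw [div_lt_iff₀ hw]; linarith
  simp [gridFloor, this]

/-- The mesh of the equidistant partition of `[a, b]` into `n + 1` cells. -/
def mesh (a b : ℝ) (n : ℕ) : ℝ := (b - a) / (n + 1)

theorem mesh_pos {a b : ℝ} (hab : a < b) (n : ℕ) : 0 < mesh a b n :=
  div_pos (sub_pos.2 hab) (by positivity)

theorem add_mul_mesh (a b : ℝ) (n : ℕ) : a + (n + 1 : ℕ) * mesh a b n = b := by
  have : (n + 1 : ℝ) ≠ 0 := by positivity
  unfold mesh
  push_cast
  field_simp
  ring

theorem tendsto_mesh (a b : ℝ) : Tendsto (mesh a b) atTop (𝓝 0) :=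
  tendsto_const_div_atTop_nhds_zero_nat (b - a) |>.comp (tendsto_add_atTop_nat 1) |>.congr
    fun n => by simp [mesh]

theorem tendsto_gridFloor_straddle {a b : ℝ} (hab : a < b) (t : ℝ) :
    Tendsto (fun n => (gridFloor a (mesh a b n) t, gridFloor a (mesh a b n) t + mesh a b n))
      atTop (straddle t) := by
  have hm := tendsto_mesh a b
  refine tendsto_straddle_iff.2 ⟨?_, ?_, Eventually.of_forall fun n =>
    ⟨gridFloor_le (mesh_pos hab n), (lt_gridFloor_add (mesh_pos hab n)).le,
      lt_add_of_pos_right _ (mesh_pos hab n)⟩⟩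
  · refine tendsto_of_tendsto_of_tendsto_of_le_of_le (g := fun n => t - mesh a b n)
      (by simpa using tendsto_const_nhds.sub hm) tendsto_const_nhds (fun n => ?_)
      fun n => gridFloor_le (mesh_pos hab n)
    have := lt_gridFloor_add (a := a) (t := t) (mesh_pos hab n)
    dsimp only
    linarith
  · refine tendsto_of_tendsto_of_tendsto_of_le_of_le (h := fun n => t + mesh a b n)
      tendsto_const_nhds (by simpa using tendsto_const_nhds.add hm)
      (fun n => (lt_gridFloor_add (mesh_pos hab n)).le) fun n => ?_
    have := gridFloor_le (a := a) (t := t) (mesh_pos hab n)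
    dsimp only
    linarith

/-- A function is measurable on an interval if a.e. it is the limit of an interval function along
intervals shrinking to the point. -/
theorem aemeasurable_of_tendsto_straddle {F : ℝ → ℝ → ℝ} {f : ℝ → ℝ} {a b : ℝ} (hab : a < b)
    (h : ∀ᵐ t : ℝ, t ∈ Ioo a b →
      Tendsto (fun p : ℝ × ℝ => F p.1 p.2) (straddle t) (𝓝 (f t))) :
    AEMeasurable f (volume.restrict (Ioc a b)) := by
  refine aemeasurable_of_tendsto_metrizable_ae atTop
    (fun n => (measurable_gridFloor_comp F a (mesh a b n)).aemeasurable) ?_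
  refine ae_restrict_Ioc_of_Ioo ?_
  filter_upwards [h] with t ht h1
  exact (ht h1).comp (tendsto_gridFloor_straddle hab t)

/-- Fatou's lemma for Riemann-type sums of a nonnegative interval function. -/
theorem integral_le_of_sum_le {F : ℝ → ℝ → ℝ} {u : ℝ → ℝ} {a b C : ℝ} (hab : a < b)
    (hu : IntervalIntegrable u volume a b) (hu0 : ∀ᵐ t : ℝ, t ∈ Ioo a b → 0 ≤ u t)
    (hF : ∀ᶠ n : ℕ in atTop, ∀ k < n + 1,
      0 ≤ F (a + k * mesh a b n) (a + (k + 1 : ℕ) * mesh a b n))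
    (hsum : ∀ᶠ n : ℕ in atTop,
      ∑ k ∈ Finset.range (n + 1), F (a + k * mesh a b n) (a + (k + 1 : ℕ) * mesh a b n) ≤ C)
    (hloc : ∀ᵐ t : ℝ, t ∈ Ioo a b → ∀ ε > 0, ∀ᶠ p in straddle t,
      (u t - ε) * (p.2 - p.1) ≤ F p.1 p.2) :
    ∫ t in a..b, u t ≤ C := by
  let f : ℕ → ℝ → ℝ := fun n t =>
    F (gridFloor a (mesh a b n) t) (gridFloor a (mesh a b n) t + mesh a b n) / mesh a b n
  have hfm : ∀ n, Measurable (f n) := fun n =>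
    (measurable_gridFloor_comp F a (mesh a b n)).div_const _
  have hcell : ∀ n : ℕ, ∀ k : ℕ, ∀ t, a + k * mesh a b n ≤ t → t < a + (k + 1 : ℕ) * mesh a b n →
      f n t = F (a + k * mesh a b n) (a + (k + 1 : ℕ) * mesh a b n) / mesh a b n := by
    intro n k t h1 h2
    simp only [f]
    rw [gridFloor_eq (mesh_pos hab n) h1 h2]
    push_cast
    ring_nf
  have h_int : ∀ᶠ n : ℕ in atTop, ∫⁻ t in Ioc a b, ENNReal.ofReal (f n t) ≤ ENNReal.ofReal C := by
    filter_upwards [hF, hsum] with n hn hs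
    have hm := mesh_pos hab n
    have hle : ∀ k : ℕ, a + k * mesh a b n ≤ a + (k + 1 : ℕ) * mesh a b n := by
      intro k; push_cast; nlinarith
    have hae : ∀ k : ℕ, ∀ᵐ t : ℝ, t ∈ Ioo (a + k * mesh a b n) (a + (k + 1 : ℕ) * mesh a b n) →
        f n t = F (a + k * mesh a b n) (a + (k + 1 : ℕ) * mesh a b n) / mesh a b n :=
      fun k => Eventually.of_forall fun t ht => hcell n k t ht.1.le ht.2
    have hii : ∀ k < n + 1, IntervalIntegrable (f n) volume
        (a + k * mesh a b n) (a + (k + 1 : ℕ) * mesh a b n) := by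
      intro k _
      refine intervalIntegrable_of_abs_le (hle k) (g := fun _ =>
        |F (a + k * mesh a b n) (a + (k + 1 : ℕ) * mesh a b n) / mesh a b n|)
        intervalIntegrable_const (hfm n).aemeasurable ?_
      filter_upwards [hae k] with t ht h1
      rw [ht h1]
    have hsumeq : ∫ t in a..b, f n t =
        ∑ k ∈ Finset.range (n + 1), F (a + k * mesh a b n) (a + (k + 1 : ℕ) * mesh a b n) := by
      have h1 := intervalIntegral.sum_integral_adjacent_intervals hii
      rw [add_mul_mesh] at h1
      simp only [Nat.cast_zero, zero_mul, add_zero] at h1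
      rw [← h1]
      refine Finset.sum_congr rfl fun k _ => ?_
      rw [integral_congr_Ioo (hle k) (hae k), intervalIntegral.integral_const, smul_eq_mul]
      push_cast
      field_simp
      ring
    have hii' : IntervalIntegrable (f n) volume a b := by
      have := IntervalIntegrable.trans_iterate hii
      rwa [add_mul_mesh, Nat.cast_zero, zero_mul, add_zero] at this
    have hnn : 0 ≤ᵐ[volume.restrict (Ioc a b)] f n := by
      refine ae_restrict_Ioc_of_Ioo (Eventually.of_forall fun t ht => ?_)
      have hfl : 0 ≤ (t - a) / mesh a b n := div_nonneg (by linarith [ht.1]) hm.le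
      have h1 : a + (⌊(t - a) / mesh a b n⌋₊ : ℝ) * mesh a b n ≤ t := by
        have := mul_le_mul_of_nonneg_right (Nat.floor_le hfl) hm.le
        rw [div_mul_cancel₀ _ hm.ne'] at this
        linarith
      have h2 : t < a + (⌊(t - a) / mesh a b n⌋₊ + 1 : ℕ) * mesh a b n := by
        have := mul_lt_mul_of_pos_right (Nat.lt_floor_add_one ((t - a) / mesh a b n)) hm
        rw [div_mul_cancel₀ _ hm.ne'] at this
        push_cast
        linarith
      have h3 : ⌊(t - a) / mesh a b n⌋₊ < n + 1 := by
        rw [Nat.floor_lt hfl, div_lt_iff₀ hm]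
        have := add_mul_mesh a b n
        linarith [ht.2]
      change 0 ≤ f n t
      rw [hcell n _ t h1 h2]
      exact div_nonneg (hn _ h3) hm.le
    rw [← ofReal_integral_eq_lintegral_ofReal hii'.1 hnn]
    rw [← intervalIntegral.integral_of_le hab.le, hsumeq]
    exact ENNReal.ofReal_le_ofReal hs
  have hC : 0 ≤ C := by
    obtain ⟨n, hn, hs⟩ := (hF.and hsum).exists
    exact (Finset.sum_nonneg fun k hk => hn k (Finset.mem_range.1 hk)).trans hs
  have hfat : ∫⁻ t in Ioc a b, ENNReal.ofReal (u t) ≤ ENNReal.ofReal C := by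
    calc ∫⁻ t in Ioc a b, ENNReal.ofReal (u t)
        ≤ ∫⁻ t in Ioc a b, liminf (fun n => ENNReal.ofReal (f n t)) atTop := by
          refine lintegral_mono_ae (ae_restrict_Ioc_of_Ioo ?_)
          filter_upwards [hloc] with t ht h1
          have hlim : Tendsto (fun ε : ℝ => ENNReal.ofReal (u t - ε)) (𝓝[>] 0)
              (𝓝 (ENNReal.ofReal (u t))) := by
            refine ENNReal.tendsto_ofReal ?_
            have : Tendsto (fun ε : ℝ => u t - ε) (𝓝 0) (𝓝 (u t - 0)) :=
              tendsto_const_nhds.sub tendsto_id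
            rw [sub_zero] at this
            exact this.mono_left nhdsWithin_le_nhds
          refine le_of_tendsto hlim ?_
          filter_upwards [self_mem_nhdsWithin] with ε hε
          refine le_liminf_of_le (by isBoundedDefault) ?_
          filter_upwards [(tendsto_gridFloor_straddle hab t).eventually (ht h1 ε hε)] with n hn
          refine ENNReal.ofReal_le_ofReal ?_
          simp only [f]
          rw [le_div_iff₀ (mesh_pos hab n)]
          simpa using hn
      _ ≤ liminf (fun n => ∫⁻ t in Ioc a b, ENNReal.ofReal (f n t)) atTop :=
          lintegral_liminf_le fun n => (hfm n).ennreal_ofReal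
      _ ≤ ENNReal.ofReal C := liminf_le_of_frequently_le' h_int.frequently
  rw [intervalIntegral.integral_of_le hab.le, integral_eq_lintegral_of_nonneg_ae
    (ae_restrict_Ioc_of_Ioo hu0) hu.1.aestronglyMeasurable]
  exact ENNReal.toReal_le_of_le_ofReal hC hfat

/-! ### Averages and upper limits -/

theorem mem_Icc_limsup_of_squeeze {ι : Type*} {l : Filter ι} [l.NeBot] {f g k : ι → ℝ} {x y : ℝ}
    (hg : Tendsto g l (𝓝 x)) (hk : Tendsto k l (𝓝 y)) (hgf : ∀ᶠ i in l, g i ≤ f i)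
    (hfk : ∀ᶠ i in l, f i ≤ k i) : limsup f l ∈ Icc x y := by
  have h1 : IsBoundedUnder (· ≤ ·) l f := hk.isBoundedUnder_le.mono_le hfk
  have h2 : IsBoundedUnder (· ≥ ·) l f := hg.isBoundedUnder_ge.mono_ge hgf
  constructor
  · rw [← hg.limsup_eq]
    exact limsup_le_limsup hgf hg.isBoundedUnder_ge.isCoboundedUnder_le h1
  · rw [← hk.limsup_eq]
    exact limsup_le_limsup hfk h2.isCoboundedUnder_le hk.isBoundedUnder_le

theorem integral_div_eq_min_max (f : ℝ → ℝ) (t e : ℝ) :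
    (∫ u in t..(t + e), f u) / e =
      (∫ u in (min t (t + e))..(max t (t + e)), f u) / (max t (t + e) - min t (t + e)) := by
  rcases le_total 0 e with he | he
  · rw [min_eq_left (by linarith), max_eq_right (by linarith), add_sub_cancel_left]
  · rw [min_eq_right (by linarith), max_eq_left (by linarith), intervalIntegral.integral_symm]
    rw [show t - (t + e) = -e by ring, neg_div, div_neg]

/-! ### Families of metrics -/

section MetricFamily

variable {X : Type*} [TopologicalSpace X] {I : Set ℝ} {d : ℝ → X → X → ℝ}

theorem IsMetricFamily.isPseudoDist (hd : IsMetricFamily I d) {s : ℝ} (hs : s ∈ I) :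
    IsPseudoDist (d s) :=
  ⟨(hd s hs).1, (hd s hs).2.2.1, (hd s hs).2.2.2.1⟩

theorem IsMetricFamily.hasBasis (hd : IsMetricFamily I d) {s : ℝ} (hs : s ∈ I) (x : X) :
    (𝓝 x).HasBasis (fun ε : ℝ => 0 < ε) (fun ε => {y | d s x y < ε}) :=
  (hd s hs).2.2.2.2 x

theorem IsMetricFamily.continuousOn (hd : IsMetricFamily I d) {s : ℝ} (hs : s ∈ I) {β : ℝ → X}
    {a b : ℝ} (hab : a ≤ b) (h : ACOn (d s) β a b) : ContinuousOn β (Icc a b) := by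
  intro t ht
  refine (hd.hasBasis hs (β t)).tendsto_right_iff.2 fun ε hε => ?_
  exact (h.tendsto_dist (hd.isPseudoDist hs) hab ht).eventually (gt_mem_nhds hε)

theorem IsMetricFamily.exists_pos_subset (hd : IsMetricFamily I d) {s : ℝ} (hs : s ∈ I)
    {K U : Set X} (hK : IsCompact K) (hU : IsOpen U) (hKU : K ⊆ U) :
    ∃ δ > 0, ∀ x ∈ K, ∀ y, d s x y < δ → y ∈ U := by
  have hp := hd.isPseudoDist hs
  let _ : PseudoMetricSpace X := PseudoMetricSpace.ofDistTopology (d s) hp.self hp.symm hp.tri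
    fun V => by
      rw [isOpen_iff_mem_nhds]
      refine forall₂_congr fun x _ => ?_
      rw [(hd.hasBasis hs x).mem_iff]
      rfl
  obtain ⟨δ, hδ, h⟩ := hK.exists_thickening_subset_open hU hKU
  refine ⟨δ, hδ, fun x hx y hy => h ?_⟩
  rw [Metric.mem_thickening_iff]
  exact ⟨x, hx, by rw [dist_comm]; exact hy⟩

/-- `r` and `ω` witness a logarithmic modulus of continuity for `s ↦ d s` on `J` and `K`. -/
structure IsModulus (d : ℝ → X → X → ℝ) (J : Set ℝ) (K : Set X) (r : ℝ) (ω : ℝ → ℝ) : Prop where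
  r_pos : 0 < r
  zero : ω 0 = 0
  mono : Monotone ω
  cont : ContinuousAt ω 0
  le : ∀ s ∈ J, ∀ s' ∈ J, ∀ x ∈ K, ∀ y ∈ K, ∀ u ∈ J, d u x y < r →
    d s x y ≤ Real.exp (ω |s - s'|) * d s' x y

theorem CondC.exists_isModulus (hdC : CondC I d) (hd : IsMetricFamily I d) {J : Set ℝ} {K : Set X}
    (hJI : J ⊆ I) (hJ : IsCompact J) (hK : IsCompact K) : ∃ r ω, IsModulus d J K r ω := by
  obtain ⟨r, hr, ω, h0, hm, hc, h⟩ := hdC J K hJI hJ hK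
  refine ⟨r, ω, hr, h0, hm, hc, fun s hs s' hs' x hx y hy u hu hur => ?_⟩
  rcases eq_or_ne x y with rfl | hxy
  · rw [(hd.isPseudoDist (hJI hs)).self, (hd.isPseudoDist (hJI hs')).self, mul_zero]
  have hbdd : BddBelow ((fun u => d u x y) '' J) :=
    ⟨0, by rintro _ ⟨u, hu, rfl⟩; exact (hd.isPseudoDist (hJI hu)).nonneg x y⟩
  have h1 := h s hs s' hs' x hx y hy hxy ((csInf_le hbdd ⟨u, hu, rfl⟩).trans_lt hur)
  have hp := (hd s (hJI hs)).2.1 x y hxy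
  have hp' := (hd s' (hJI hs')).2.1 x y hxy
  rw [← div_le_iff₀ hp', ← Real.exp_log (div_pos hp hp')]
  exact Real.exp_le_exp.2 ((le_abs_self _).trans h1)

theorem IsModulus.le_of_abs_le {J : Set ℝ} {K : Set X} {r : ℝ} {ω : ℝ → ℝ}
    (h : IsModulus d J K r ω) (hd : IsMetricFamily I d) (hJI : J ⊆ I) {s s' M u : ℝ} (hs : s ∈ J)
    (hs' : s' ∈ J) (hM : |s - s'| ≤ M) {x y : X} (hx : x ∈ K) (hy : y ∈ K) (hu : u ∈ J)
    (hr : d u x y < r) : d s x y ≤ Real.exp (ω M) * d s' x y :=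
  (h.le s hs s' hs' x hx y hy u hu hr).trans <| mul_le_mul_of_nonneg_right
    (Real.exp_le_exp.2 (h.mono hM)) ((hd.isPseudoDist (hJI hs')).nonneg x y)

theorem tendsto_zero_of_tendsto_div {g : ℝ × ℝ → ℝ} {t m : ℝ}
    (h : Tendsto (fun p : ℝ × ℝ => g p / (p.2 - p.1)) (straddle t) (𝓝 m)) :
    Tendsto g (straddle t) (𝓝 0) := by
  have h1 : Tendsto (fun p : ℝ × ℝ => p.2 - p.1) (straddle t) (𝓝 0) := by
    simpa using (tendsto_snd_straddle t).sub (tendsto_fst_straddle t)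
  have h2 := h.mul h1
  rw [mul_zero] at h2
  refine h2.congr' ?_
  filter_upwards [eventually_straddle t] with p hp
  exact div_mul_cancel₀ _ (sub_pos.2 hp.2.2).ne'

/-- Speeds of a curve with respect to two metrics of the family are comparable. -/
theorem IsModulus.speed_le {J : Set ℝ} {K : Set X} {r : ℝ} {ω : ℝ → ℝ}
    (h : IsModulus d J K r ω) (hd : IsMetricFamily I d) (hJI : J ⊆ I) {s s' M : ℝ} (hs : s ∈ J)
    (hs' : s' ∈ J) (hM : |s - s'| ≤ M) {β : ℝ → X} {a b t m m' : ℝ} (ht : t ∈ Ioo a b)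
    (hβ : ∀ u ∈ Ioo a b, β u ∈ K)
    (hm : Tendsto (fun p : ℝ × ℝ => d s (β p.1) (β p.2) / (p.2 - p.1)) (straddle t) (𝓝 m))
    (hm' : Tendsto (fun p : ℝ × ℝ => d s' (β p.1) (β p.2) / (p.2 - p.1)) (straddle t) (𝓝 m')) :
    m ≤ Real.exp (ω M) * m' := by
  refine le_of_tendsto_of_tendsto hm (hm'.const_mul (Real.exp (ω M))) ?_
  filter_upwards [eventually_straddle t, eventually_straddle_mem (Ioo_mem_nhds ht.1 ht.2),
    (tendsto_zero_of_tendsto_div hm).eventually (gt_mem_nhds h.r_pos)] with p hp ⟨h1, h2⟩ h3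
  have h4 : 0 < p.2 - p.1 := sub_pos.2 hp.2.2
  rw [mul_div_assoc']
  gcongr
  exact h.le_of_abs_le hd hJI hs hs' hM (hβ _ h1) (hβ _ h2) hs h3

/-- For a.e. `t` the generalized speed is the limit of difference quotients, locally uniformly in
the parameter of the family of metrics. -/
theorem ae_tendsto_genSpeed (hIopen : IsOpen I) (hd : IsMetricFamily I d) (hdC : CondC I d)
    {β : ℝ → X} {a b : ℝ} (hab : a < b) (hβ : ∀ s ∈ I, ACOn (d s) β a b) :
    ∀ᵐ t : ℝ, t ∈ Ioo a b → ∀ s ∈ I, 0 ≤ genSpeed d β s t ∧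
      Tendsto (fun z : ℝ × (ℝ × ℝ) => d z.1 (β z.2.1) (β z.2.2) / (z.2.2 - z.2.1))
        (𝓝 s ×ˢ straddle t) (𝓝 (genSpeed d β s t)) := by
  choose! m hmi hmd hmt using fun s (hs : s ∈ I) =>
    (hβ s hs).exists_metric_deriv (hd.isPseudoDist hs) hab
  have hspeed : ∀ s ∈ I, ∀ᵐ t : ℝ, t ∈ Ioo a b → mSpeed (d s) β t = m s t := by
    intro s hs
    filter_upwards [hmt s hs] with t ht h1
    refine (((ht h1).2.1.comp (tendsto_min_max_straddle t)).congr fun e => ?_).limsup_eq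
    simp only [Function.comp_apply]
    rcases le_total 0 e with he | he
    · rw [min_eq_left (by linarith), max_eq_right (by linarith), add_sub_cancel_left,
        abs_of_nonneg he, (hd.isPseudoDist hs).symm]
    · rw [min_eq_right (by linarith), max_eq_left (by linarith), abs_of_nonpos he]
      congr 1
      ring
  have hQ : ∀ᵐ t : ℝ, ∀ q : ℚ, (q : ℝ) ∈ I → t ∈ Ioo a b → 0 ≤ m q t ∧
      Tendsto (fun p : ℝ × ℝ => d q (β p.1) (β p.2) / (p.2 - p.1)) (straddle t) (𝓝 (m q t)) ∧
      HasDerivAt (fun x => ∫ r in a..x, m q r) (m q t) t := by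
    rw [ae_all_iff]
    intro q
    by_cases hq : (q : ℝ) ∈ I
    · filter_upwards [hmt q hq] with t ht _ using ht
    · exact Eventually.of_forall fun t h => absurd h hq
  have hmle : ∀ {J : Set ℝ} {r : ℝ} {ω : ℝ → ℝ}, J ⊆ I → IsModulus d J (β '' Icc a b) r ω →
      ∀ s ∈ J, ∀ s' ∈ J, ∀ M, |s - s'| ≤ M → ∀ᵐ t : ℝ, t ∈ Ioo a b →
        m s t ≤ Real.exp (ω M) * m s' t := by
    intro J r ω hJI hω s hs s' hs' M hM
    filter_upwards [hmt s (hJI hs), hmt s' (hJI hs')] with t h1 h2 ht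
    exact hω.speed_le hd hJI hs hs' hM ht
      (fun u hu => mem_image_of_mem β (Ioo_subset_Icc_self hu)) (h1 ht).2.1
      (h2 ht).2.1
  have hIsub : ∀ q ∈ I, ∀ t ∈ Icc a b, ∀ u ∈ Icc a b,
      ∫ r in t..u, m q r = (∫ r in a..u, m q r) - ∫ r in a..t, m q r := fun q hq t ht u hu =>
    (intervalIntegral.integral_interval_sub_left
      (intervalIntegrable_mono_Icc (hmi q hq) le_rfl hu.1 hu.2)
      (intervalIntegrable_mono_Icc (hmi q hq) le_rfl ht.1 ht.2)).symm
  filter_upwards [hQ] with t hQt ht s hs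
  have hK : IsCompact (β '' Icc a b) :=
    isCompact_Icc.image_of_continuousOn (hd.continuousOn hs hab.le (hβ s hs))
  obtain ⟨ρ, hρ, hρI⟩ := Metric.isOpen_iff.1 hIopen s hs
  set J := Metric.closedBall s (ρ / 2) with hJdef
  have hJI : J ⊆ I := (Metric.closedBall_subset_ball (half_lt_self hρ)).trans hρI
  have hsJ : s ∈ J := Metric.mem_closedBall_self (half_pos hρ).le
  obtain ⟨r, ω, hω⟩ := hdC.exists_isModulus hd hJI (isCompact_closedBall _ _) hK
  -- bounds for the generalized speed at `s` in terms of speeds at nearby rational parameters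
  have hbound : ∀ q : ℚ, (q : ℝ) ∈ J → ∀ M, |s - q| ≤ M →
      genSpeed d β s t ∈ Icc ((Real.exp (ω M))⁻¹ * m q t) (Real.exp (ω M) * m q t) := by
    intro q hq M hM
    have havg : Tendsto (fun p : ℝ × ℝ => (∫ r in p.1..p.2, m q r) / (p.2 - p.1)) (straddle t)
        (𝓝 (m q t)) := by
      refine ((hQt q (hJI hq) ht).2.2.tendsto_straddle).congr' ?_
      filter_upwards [eventually_straddle_mem (Icc_mem_nhds ht.1 ht.2)] with p ⟨h1, h2⟩
      rw [hIsub q (hJI hq) _ h1 _ h2]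
    have hlim := havg.comp (tendsto_min_max_straddle t)
    have hgen : genSpeed d β s t = limsup (fun e : ℝ =>
        (∫ u in (min t (t + e))..(max t (t + e)), mSpeed (d s) β u) /
          (max t (t + e) - min t (t + e))) (𝓝[≠] 0) := by
      unfold genSpeed
      simp_rw [← integral_div_eq_min_max]
    have h_int : ∀ p : ℝ × ℝ, p.1 ∈ Icc a b → p.2 ∈ Icc a b → p.1 ≤ p.2 →
        ∫ u in p.1..p.2, mSpeed (d s) β u = ∫ u in p.1..p.2, m s u := by
      intro p h1 h2 h3
      refine integral_congr_Ioo h3 ?_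
      filter_upwards [hspeed s hs] with u hu h4
      exact hu ⟨h1.1.trans_lt h4.1, h4.2.trans_le h2.2⟩
    rw [hgen]
    refine mem_Icc_limsup_of_squeeze (hlim.const_mul _) (hlim.const_mul _) ?_ ?_
    · filter_upwards [(tendsto_min_max_straddle t).eventually (eventually_straddle t),
        (tendsto_min_max_straddle t).eventually
          (eventually_straddle_mem (Icc_mem_nhds ht.1 ht.2))] with e ⟨_, _, h3⟩ ⟨h1, h2⟩
      simp only [Function.comp_apply]
      have h4 : 0 < max t (t + e) - min t (t + e) := sub_pos.2 h3
      rw [h_int (min t (t + e), max t (t + e)) h1 h2 h3.le, mul_div_assoc']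
      gcongr
      rw [inv_mul_le_iff₀ (Real.exp_pos _), ← intervalIntegral.integral_const_mul]
      refine integral_mono_Ioo h3.le (intervalIntegrable_mono_Icc (hmi q (hJI hq)) h1.1 h3.le h2.2)
        ((intervalIntegrable_mono_Icc (hmi s hs) h1.1 h3.le h2.2).const_mul _) ?_
      filter_upwards [hmle hJI hω q hq s hsJ M (by rwa [abs_sub_comm])] with u hu h5
      exact hu ⟨h1.1.trans_lt h5.1, h5.2.trans_le h2.2⟩
    · filter_upwards [(tendsto_min_max_straddle t).eventually (eventually_straddle t),
        (tendsto_min_max_straddle t).eventually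
          (eventually_straddle_mem (Icc_mem_nhds ht.1 ht.2))] with e ⟨_, _, h3⟩ ⟨h1, h2⟩
      simp only [Function.comp_apply]
      have h4 : 0 < max t (t + e) - min t (t + e) := sub_pos.2 h3
      rw [h_int (min t (t + e), max t (t + e)) h1 h2 h3.le, mul_div_assoc']
      gcongr
      rw [← intervalIntegral.integral_const_mul]
      refine integral_mono_Ioo h3.le (intervalIntegrable_mono_Icc (hmi s hs) h1.1 h3.le h2.2)
        ((intervalIntegrable_mono_Icc (hmi q (hJI hq)) h1.1 h3.le h2.2).const_mul _) ?_
      filter_upwards [hmle hJI hω s hsJ q hq M hM] with u hu h5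
      exact hu ⟨h1.1.trans_lt h5.1, h5.2.trans_le h2.2⟩
  have hrat : ∀ η, 0 < η → η ≤ ρ / 2 → ∃ q : ℚ, |s - q| ≤ η / 2 ∧ (q : ℝ) ∈ J := by
    intro η hη hη'
    obtain ⟨q, h1, h2⟩ := exists_rat_btwn (show s < s + η / 2 by linarith)
    have : |s - q| ≤ η / 2 := by rw [abs_le]; constructor <;> linarith
    refine ⟨q, this, ?_⟩
    rw [hJdef, Metric.mem_closedBall, dist_comm, Real.dist_eq]
    linarith
  have hexp : Tendsto (fun η => Real.exp (ω η)) (𝓝[>] 0) (𝓝 1) := by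
    have : Tendsto ω (𝓝[>] 0) (𝓝 0) := by
      have := hω.cont.tendsto
      rw [hω.zero] at this
      exact this.mono_left nhdsWithin_le_nhds
    have h := (Real.continuous_exp.tendsto 0).comp this
    rw [Real.exp_zero] at h
    exact h
  have hsmall : ∀ᶠ η in 𝓝[>] (0 : ℝ), 0 < η ∧ η ≤ ρ / 2 := by
    filter_upwards [Ioc_mem_nhdsGT (half_pos hρ)] with η hη using hη
  have hnear : ∀ η > 0, ∀ᶠ z in 𝓝 s ×ˢ straddle t, |s - z.1| ≤ η := by
    intro η hη
    have : ∀ᶠ s' in 𝓝 s, |s - s'| ≤ η := by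
      filter_upwards [Metric.closedBall_mem_nhds s hη] with s' hs'
      rwa [← Real.dist_eq, dist_comm]
    exact (tendsto_fst (f := 𝓝 s) (g := straddle t)).eventually this
  -- comparison of difference quotients
  have hquot : ∀ η, 0 < η → η ≤ ρ / 2 → ∀ q : ℚ, |s - q| ≤ η / 2 → (q : ℝ) ∈ J →
      ∀ᶠ z in 𝓝 s ×ˢ straddle t,
        d z.1 (β z.2.1) (β z.2.2) / (z.2.2 - z.2.1) ≤
          Real.exp (ω η) * (d q (β z.2.1) (β z.2.2) / (z.2.2 - z.2.1)) ∧
        (Real.exp (ω η))⁻¹ * (d q (β z.2.1) (β z.2.2) / (z.2.2 - z.2.1)) ≤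
          d z.1 (β z.2.1) (β z.2.2) / (z.2.2 - z.2.1) := by
    intro η hη hη' q hq hqJ
    have h1 := (eventually_straddle t).and ((eventually_straddle_mem (Icc_mem_nhds ht.1 ht.2)).and
      ((tendsto_zero_of_tendsto_div (hQt q (hJI hqJ) ht).2.1).eventually (gt_mem_nhds hω.r_pos)))
    filter_upwards [(tendsto_snd (f := 𝓝 s) (g := straddle t)).eventually h1,
      hnear (η / 2) (half_pos hη)] with z ⟨h2, h3, h4⟩ h5
    have h6 : 0 < z.2.2 - z.2.1 := sub_pos.2 h2.2.2
    have hzJ : z.1 ∈ J := by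
      rw [hJdef, Metric.mem_closedBall, dist_comm, Real.dist_eq]
      linarith
    have h7 : |z.1 - q| ≤ η := by
      have := abs_sub_le z.1 s q
      rw [abs_sub_comm z.1 s] at this
      linarith
    have hx := mem_image_of_mem β h3.1
    have hy := mem_image_of_mem β h3.2
    constructor
    · rw [mul_div_assoc']
      gcongr
      exact hω.le_of_abs_le hd hJI hzJ hqJ h7 hx hy hqJ h4
    · rw [mul_div_assoc']
      gcongr
      rw [inv_mul_le_iff₀ (Real.exp_pos _)]
      exact hω.le_of_abs_le hd hJI hqJ hzJ (by rwa [abs_sub_comm]) hx hy hqJ h4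
  have hlimq : ∀ q : ℚ, (q : ℝ) ∈ J → Tendsto (fun z : ℝ × (ℝ × ℝ) =>
      d q (β z.2.1) (β z.2.2) / (z.2.2 - z.2.1)) (𝓝 s ×ˢ straddle t) (𝓝 (m q t)) := fun q hq =>
    (hQt q (hJI hq) ht).2.1.comp tendsto_snd
  refine ⟨?_, tendsto_order.2 ⟨fun c hc => ?_, fun c hc => ?_⟩⟩
  · obtain ⟨q, hq, hqJ⟩ := hrat (ρ / 2) (half_pos hρ) le_rfl
    exact (mul_nonneg (inv_nonneg.2 (Real.exp_pos _).le) (hQt q (hJI hqJ) ht).1).trans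
      (hbound q hqJ _ hq).1
  · have h1 : Tendsto (fun η => (Real.exp (ω η))⁻¹ *
        ((Real.exp (ω η))⁻¹ * genSpeed d β s t)) (𝓝[>] 0)
        (𝓝 (genSpeed d β s t)) := by
      simpa using (hexp.inv₀ one_ne_zero).mul ((hexp.inv₀ one_ne_zero).mul_const (genSpeed d β s t))
    obtain ⟨η, h2, h3, h4⟩ := ((h1.eventually (lt_mem_nhds hc)).and hsmall).exists
    obtain ⟨q, hq, hqJ⟩ := hrat η h3 h4
    have h5 : (Real.exp (ω η))⁻¹ * genSpeed d β s t ≤ m q t := by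
      rw [inv_mul_le_iff₀ (Real.exp_pos _)]
      exact (hbound q hqJ η (by linarith)).2
    have h6 : c < (Real.exp (ω η))⁻¹ * m q t :=
      h2.trans_le (mul_le_mul_of_nonneg_left h5 (inv_nonneg.2 (Real.exp_pos _).le))
    filter_upwards [hquot η h3 h4 q hq hqJ,
      ((hlimq q hqJ).const_mul (Real.exp (ω η))⁻¹).eventually (lt_mem_nhds h6)] with z h7 h8
    exact h8.trans_le h7.2
  · have h1 : Tendsto (fun η => Real.exp (ω η) * (Real.exp (ω η) * genSpeed d β s t)) (𝓝[>] 0)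
        (𝓝 (genSpeed d β s t)) := by
      simpa using hexp.mul (hexp.mul_const (genSpeed d β s t))
    obtain ⟨η, h2, h3, h4⟩ := ((h1.eventually (gt_mem_nhds hc)).and hsmall).exists
    obtain ⟨q, hq, hqJ⟩ := hrat η h3 h4
    have h5 : m q t ≤ Real.exp (ω η) * genSpeed d β s t := by
      rw [← inv_mul_le_iff₀ (Real.exp_pos _)]
      exact (hbound q hqJ η (by linarith)).1
    have h6 : Real.exp (ω η) * m q t < c :=
      (mul_le_mul_of_nonneg_left h5 (Real.exp_pos _).le).trans_lt h2
    filter_upwards [hquot η h3 h4 q hq hqJ,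
      ((hlimq q hqJ).const_mul (Real.exp (ω η))).eventually (gt_mem_nhds h6)] with z h7 h8
    exact h7.1.trans_lt h8

end MetricFamily

/-! ### Causal curves -/

/-- Minkowski's inequality for the integral of a vector valued function in the plane. -/
theorem sq_integral_add_sq_integral_le {f v g : ℝ → ℝ} {a b : ℝ} (hab : a ≤ b)
    (hf : IntervalIntegrable f volume a b) (hv : IntervalIntegrable v volume a b)
    (hg : IntervalIntegrable g volume a b)
    (h : ∀ᵐ t : ℝ, t ∈ Ioo a b → 0 ≤ g t ∧ f t ^ 2 + v t ^ 2 ≤ g t ^ 2) :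
    (∫ t in a..b, f t) ^ 2 + (∫ t in a..b, v t) ^ 2 ≤ (∫ t in a..b, g t) ^ 2 := by
  set A := ∫ t in a..b, f t
  set B := ∫ t in a..b, v t
  set r := Real.sqrt (A ^ 2 + B ^ 2)
  have hr0 : 0 ≤ r := Real.sqrt_nonneg _
  have hr : r ^ 2 = A ^ 2 + B ^ 2 := Real.sq_sqrt (by positivity)
  have hg0 : 0 ≤ ∫ t in a..b, g t := by
    have := integral_mono_Ioo (f := fun _ => (0 : ℝ)) hab (by simp) hg
      (by filter_upwards [h] with t h1 ht using (h1 ht).1)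
    simpa using this
  have key : ∫ t in a..b, (A * f t + B * v t) ≤ ∫ t in a..b, r * g t := by
    refine integral_mono_Ioo hab ((hf.const_mul A).add (hv.const_mul B)) (hg.const_mul r) ?_
    filter_upwards [h] with t h1 ht
    obtain ⟨h2, h3⟩ := h1 ht
    refine abs_le_of_sq_le_sq' ?_ (mul_nonneg hr0 h2) |>.2
    rw [mul_pow, hr]
    nlinarith [sq_nonneg (A * v t - B * f t), mul_le_mul_of_nonneg_left h3
      (add_nonneg (sq_nonneg A) (sq_nonneg B))]
  rw [intervalIntegral.integral_add (hf.const_mul A) (hv.const_mul B),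
    intervalIntegral.integral_const_mul, intervalIntegral.integral_const_mul,
    intervalIntegral.integral_const_mul] at key
  have h4 : r * r ≤ r * ∫ t in a..b, g t := by nlinarith
  rw [← hr]
  rcases hr0.eq_or_lt with h5 | h5
  · rw [← h5, zero_pow two_ne_zero]
    exact sq_nonneg _
  · exact pow_le_pow_left₀ hr0 (le_of_mul_le_mul_left h4 h5) 2

theorem ACOn.continuousOn_rdist {φ : ℝ → ℝ} {a b : ℝ} (hab : a ≤ b) (hφ : ACOn rdist φ a b) :
    ContinuousOn φ (Icc a b) := by
  have := (hφ.absolutelyContinuousOnInterval hab).continuousOn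
  rwa [uIcc_of_le hab] at this

/-- The data `I`, `d`, `h` of a generalized Lorentzian product. -/
structure IsGenProduct {X : Type*} [TopologicalSpace X] (I : Set ℝ) (d : ℝ → X → X → ℝ)
    (h : ℝ → X → ℝ) : Prop where
  isOpen : IsOpen I
  ordConnected : I.OrdConnected
  metric : IsMetricFamily I d
  condC : CondC I d
  pos : ∀ s ∈ I, ∀ x : X, 0 < h s x
  cont : ContinuousOn (fun z : ℝ × X => h z.1 z.2) (I ×ˢ (univ : Set X))

namespace FutureCausal

variable {X : Type*} {I : Set ℝ} {d : ℝ → X → X → ℝ} {h : ℝ → X → ℝ} {α : ℝ → ℝ} {β : ℝ → X}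
  {a b : ℝ}

theorem lt (hc : FutureCausal I d h α β a b) : a < b := hc.1.1

theorem mem (hc : FutureCausal I d h α β a b) {t : ℝ} (ht : t ∈ Icc a b) : α t ∈ I :=
  hc.1.2.2.2 t ht

theorem mono (hc : FutureCausal I d h α β a b) {c e : ℝ} (hac : a ≤ c) (hce : c < e)
    (heb : e ≤ b) : FutureCausal I d h α β c e := by
  obtain ⟨⟨-, h1, h2, h3⟩, h4, h5⟩ := hc
  refine ⟨⟨hce, h1.mono hac heb, fun s hs => (h2 s hs).mono hac heb,
    fun t ht => h3 t (Icc_subset_Icc hac heb ht)⟩, ?_, ?_⟩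
  · filter_upwards [h4] with t h6 ht using h6 (Ioo_subset_Ioo hac heb ht)
  · filter_upwards [h5] with t h6 ht using h6 (Ioo_subset_Ioo hac heb ht)

theorem continuousOn_fst (hc : FutureCausal I d h α β a b) : ContinuousOn α (Icc a b) :=
  hc.1.2.1.continuousOn_rdist hc.lt.le

theorem intervalIntegrable_deriv (hc : FutureCausal I d h α β a b) :
    IntervalIntegrable (deriv α) volume a b :=
  (hc.1.2.1.absolutelyContinuousOnInterval hc.lt.le).intervalIntegrable_deriv

theorem integral_deriv (hc : FutureCausal I d h α β a b) :
    ∫ t in a..b, deriv α t = α b - α a :=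
  (hc.1.2.1.absolutelyContinuousOnInterval hc.lt.le).integral_deriv_eq_sub

theorem ae_hasDerivAt (hc : FutureCausal I d h α β a b) :
    ∀ᵐ t : ℝ, t ∈ Ioo a b → 0 < deriv α t ∧ HasDerivAt α (deriv α t) t := by
  filter_upwards [(hc.1.2.1.absolutelyContinuousOnInterval hc.lt.le).ae_differentiableAt, hc.2.1]
    with t h1 h2 ht
  refine ⟨h2 ht, (h1 ?_).hasDerivAt⟩
  rw [uIcc_of_le hc.lt.le]
  exact Ioo_subset_Icc_self ht

theorem le (hc : FutureCausal I d h α β a b) : α a ≤ α b := by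
  have := integral_mono_Ioo (f := fun _ => (0 : ℝ)) hc.lt.le (by simp) hc.intervalIntegrable_deriv
    (by filter_upwards [hc.2.1] with t h1 ht using (h1 ht).le)
  rw [hc.integral_deriv] at this
  simpa using this

theorem monotoneOn (hc : FutureCausal I d h α β a b) : MonotoneOn α (Icc a b) := by
  intro t ht u hu htu
  rcases htu.eq_or_lt with rfl | htu
  · exact le_rfl
  · exact (hc.mono ht.1 htu hu.2).le

theorem mem_Icc (hc : FutureCausal I d h α β a b) {t : ℝ} (ht : t ∈ Icc a b) :
    α t ∈ Icc (α a) (α b) :=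
  ⟨hc.monotoneOn (left_mem_Icc.2 hc.lt.le) ht ht.1,
    hc.monotoneOn ht (right_mem_Icc.2 hc.lt.le) ht.2⟩

variable [TopologicalSpace X]

theorem continuousOn_snd (hc : FutureCausal I d h α β a b) (hG : IsGenProduct I d h) :
    ContinuousOn β (Icc a b) :=
  have hs := hc.mem (left_mem_Icc.2 hc.lt.le)
  hG.metric.continuousOn hs hc.lt.le (hc.1.2.2.1 _ hs)

theorem continuousOn_warp (hc : FutureCausal I d h α β a b) (hG : IsGenProduct I d h) :
    ContinuousOn (fun t => h (α t) (β t)) (Icc a b) :=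
  hG.cont.comp (hc.continuousOn_fst.prodMk (hc.continuousOn_snd hG)) fun _ ht =>
    ⟨hc.mem ht, mem_univ _⟩

theorem ae_tendsto_genSpeed (hc : FutureCausal I d h α β a b) (hG : IsGenProduct I d h) :
    ∀ᵐ t : ℝ, t ∈ Ioo a b → 0 ≤ genSpeed d β (α t) t ∧
      Tendsto (fun p : ℝ × ℝ => d (α p.1) (β p.1) (β p.2) / (p.2 - p.1)) (straddle t)
        (𝓝 (genSpeed d β (α t) t)) := by
  filter_upwards [_root_.ae_tendsto_genSpeed hG.isOpen hG.metric hG.condC hc.lt hc.1.2.2.1]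
    with t h1 ht
  obtain ⟨h2, h3⟩ := h1 ht (α t) (hc.mem (Ioo_subset_Icc_self ht))
  refine ⟨h2, h3.comp (g := fun z : ℝ × (ℝ × ℝ) => d z.1 (β z.2.1) (β z.2.2) / (z.2.2 - z.2.1))
    (f := fun p : ℝ × ℝ => (α p.1, p)) ?_⟩
  have h4 := (hc.continuousOn_fst t (Ioo_subset_Icc_self ht)).continuousAt (Icc_mem_nhds ht.1 ht.2)
  exact (h4.tendsto.comp (tendsto_fst_straddle t)).prodMk tendsto_id

theorem ae_genSpeed_le (hc : FutureCausal I d h α β a b) (hG : IsGenProduct I d h) :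
    ∀ᵐ t : ℝ, t ∈ Ioo a b →
      0 ≤ genSpeed d β (α t) t ∧ genSpeed d β (α t) t ≤ h (α t) (β t) * deriv α t := by
  filter_upwards [hc.ae_tendsto_genSpeed hG, hc.2.1, hc.2.2] with t h1 h2 h3 ht
  refine ⟨(h1 ht).1, abs_le_of_sq_le_sq' ?_ (mul_nonneg
    (hG.pos _ (hc.mem (Ioo_subset_Icc_self ht)) _).le (h2 ht).le) |>.2⟩
  rw [mul_pow]
  exact h3 ht

theorem intervalIntegrable_warp_mul_deriv (hc : FutureCausal I d h α β a b)
    (hG : IsGenProduct I d h) :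
    IntervalIntegrable (fun t => h (α t) (β t) * deriv α t) volume a b := by
  refine hc.intervalIntegrable_deriv.continuousOn_mul ?_
  rw [uIcc_of_le hc.lt.le]
  exact hc.continuousOn_warp hG

theorem intervalIntegrable_genSpeed (hc : FutureCausal I d h α β a b) (hG : IsGenProduct I d h) :
    IntervalIntegrable (fun t => genSpeed d β (α t) t) volume a b := by
  refine intervalIntegrable_of_abs_le hc.lt.le (hc.intervalIntegrable_warp_mul_deriv hG) ?_ ?_
  · exact aemeasurable_of_tendsto_straddle
      (F := fun t u => d (α t) (β t) (β u) / (u - t)) hc.lt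
      (by filter_upwards [hc.ae_tendsto_genSpeed hG] with t h1 ht using (h1 ht).2)
  · filter_upwards [hc.ae_genSpeed_le hG] with t h1 ht
    rw [abs_of_nonneg (h1 ht).1]
    exact (h1 ht).2

theorem intervalIntegrable_lorLen (hc : FutureCausal I d h α β a b) (hG : IsGenProduct I d h) :
    IntervalIntegrable (fun t => Real.sqrt ((h (α t) (β t)) ^ 2 * (deriv α t) ^ 2 -
      (genSpeed d β (α t) t) ^ 2)) volume a b := by
  have h1 := hc.intervalIntegrable_warp_mul_deriv hG
  refine intervalIntegrable_of_abs_le hc.lt.le h1 ?_ ?_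
  · have h2 := h1.1.aestronglyMeasurable.aemeasurable
    have h3 := (hc.intervalIntegrable_genSpeed hG).1
      |>.aestronglyMeasurable.aemeasurable
    simp_rw [← mul_pow]
    exact ((h2.pow_const 2).sub (h3.pow_const 2)).sqrt
  · filter_upwards [hc.ae_genSpeed_le hG] with t h1 ht
    rw [abs_of_nonneg (Real.sqrt_nonneg _), ← mul_pow]
    refine Real.sqrt_le_iff.2 ⟨(h1 ht).1.trans (h1 ht).2, ?_⟩
    linarith [sq_nonneg (genSpeed d β (α t) t)]

theorem dist_le_exp_mul_integral (hc : FutureCausal I d h α β a b) (hG : IsGenProduct I d h)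
    {J : Set ℝ} {K : Set X} {r : ℝ} {ω : ℝ → ℝ} (hω : IsModulus d J K r ω) (hJI : J ⊆ I)
    {s M : ℝ} (hs : s ∈ J) (hαJ : ∀ t ∈ Ioo a b, α t ∈ J) (hβK : ∀ t ∈ Ioo a b, β t ∈ K)
    (hM : ∀ t ∈ Ioo a b, |s - α t| ≤ M) :
    d s (β a) (β b) ≤ Real.exp (ω M) * ∫ t in a..b, genSpeed d β (α t) t := by
  obtain ⟨m, hmi, hmd, hmt⟩ :=
    (hc.1.2.2.1 s (hJI hs)).exists_metric_deriv (hG.metric.isPseudoDist (hJI hs)) hc.lt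
  refine (hmd a (left_mem_Icc.2 hc.lt.le) b (right_mem_Icc.2 hc.lt.le) hc.lt.le).trans ?_
  rw [← intervalIntegral.integral_const_mul]
  refine integral_mono_Ioo hc.lt.le hmi
    ((hc.intervalIntegrable_genSpeed hG).const_mul _) ?_
  filter_upwards [hmt, _root_.ae_tendsto_genSpeed hG.isOpen hG.metric hG.condC hc.lt hc.1.2.2.1]
    with t h1 h2 ht
  refine hω.speed_le hG.metric hJI hs (hαJ t ht) (hM t ht) ht hβK (h1 ht).2.1 ?_
  exact (h2 ht _ (hJI (hαJ t ht))).2.comp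
    (g := fun z : ℝ × (ℝ × ℝ) => d z.1 (β z.2.1) (β z.2.2) / (z.2.2 - z.2.1))
    (f := fun p : ℝ × ℝ => (α t, p)) (tendsto_const_nhds.prodMk tendsto_id)

theorem integral_genSpeed_le (hc : FutureCausal I d h α β a b) (hG : IsGenProduct I d h) {H : ℝ}
    (hH : ∀ t ∈ Ioo a b, h (α t) (β t) ≤ H) :
    ∫ t in a..b, genSpeed d β (α t) t ≤ H * (α b - α a) := by
  rw [← hc.integral_deriv, ← intervalIntegral.integral_const_mul]
  refine integral_mono_Ioo hc.lt.le (hc.intervalIntegrable_genSpeed hG)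
    (hc.intervalIntegrable_deriv.const_mul H) ?_
  filter_upwards [hc.ae_genSpeed_le hG, hc.2.1] with t h1 h2 ht
  exact (h1 ht).2.trans (mul_le_mul_of_nonneg_right (hH t ht) (h2 ht).le)

theorem sq_lorLen_add_sq_le (hc : FutureCausal I d h α β a b) (hG : IsGenProduct I d h) {H : ℝ}
    (hH : ∀ t ∈ Ioo a b, h (α t) (β t) ≤ H) :
    lorLen d h α β a b ^ 2 + (∫ t in a..b, genSpeed d β (α t) t) ^ 2 ≤
      (H * (α b - α a)) ^ 2 := by
  rw [← hc.integral_deriv, ← intervalIntegral.integral_const_mul]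
  refine sq_integral_add_sq_integral_le hc.lt.le
    (hc.intervalIntegrable_lorLen hG)
    (hc.intervalIntegrable_genSpeed hG)
    (hc.intervalIntegrable_deriv.const_mul H) ?_
  filter_upwards [hc.ae_genSpeed_le hG, hc.2.1, hc.2.2] with t h1 h2 h3 ht
  have h4 : 0 ≤ h (α t) (β t) * deriv α t := (h1 ht).1.trans (h1 ht).2
  have h5 := mul_le_mul_of_nonneg_right (hH t ht) (h2 ht).le
  refine ⟨h4.trans h5, ?_⟩
  rw [Real.sq_sqrt (sub_nonneg.2 (h3 ht)), sub_add_cancel, ← mul_pow]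
  exact pow_le_pow_left₀ h4 h5 2

/-- A short causal curve starting well inside a compact set stays close to its starting point. -/
theorem dist_le (hc : FutureCausal I d h α β a b) (hG : IsGenProduct I d h)
    {J : Set ℝ} {K : Set X} {r : ℝ} {ω : ℝ → ℝ} (hω : IsModulus d J K r ω) (hJI : J ⊆ I)
    {s M H δ : ℝ} (hs : s ∈ J) (hαJ : ∀ t ∈ Icc a b, α t ∈ J) (hM : ∀ u ∈ J, |s - u| ≤ M)
    (hH0 : 0 ≤ H) (hH : ∀ u ∈ J, ∀ x ∈ K, h u x ≤ H) (hδ : ∀ y, d s (β a) y < δ → y ∈ K)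
    (hsmall : Real.exp (ω M) * (H * (α b - α a)) < δ) {u : ℝ} (hu : u ∈ Icc a b) :
    d s (β a) (β u) ≤ Real.exp (ω M) * (H * (α b - α a)) := by
  have hsub : ∀ v ∈ Icc a b, (∀ w ∈ Ioo a v, β w ∈ K) →
      d s (β a) (β v) ≤ Real.exp (ω M) * (H * (α b - α a)) := by
    intro v hv hvK
    rcases hv.1.eq_or_lt with rfl | hav
    · rw [(hG.metric.isPseudoDist (hJI hs)).self]
      exact mul_nonneg (Real.exp_pos _).le (mul_nonneg hH0 (sub_nonneg.2 hc.le))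
    have hc' := hc.mono le_rfl hav hv.2
    have hαJ' : ∀ w ∈ Ioo a v, α w ∈ J := fun w hw => hαJ w ⟨hw.1.le, hw.2.le.trans hv.2⟩
    refine (hc'.dist_le_exp_mul_integral hG hω hJI hs hαJ' hvK
      fun w hw => hM _ (hαJ' w hw)).trans ?_
    gcongr
    refine (hc'.integral_genSpeed_le hG
      fun w hw => hH _ (hαJ' w hw) _ (hvK w hw)).trans ?_
    gcongr
    exact (hc.mem_Icc hv).2
  refine hsub u hu fun w hw => hδ _ ?_
  by_contra! hcon
  have hD : ContinuousOn (fun v => d s (β a) (β v)) (Icc a b) :=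
    ((hc.1.2.2.1 s (hJI hs)).comp_dist (hG.metric.isPseudoDist (hJI hs)) (β a)
      ).continuousOn_rdist hc.lt.le
  obtain ⟨T, ⟨hT, hTδ⟩, hTmin⟩ :=
    (isCompact_Icc.of_isClosed_subset (hD.preimage_isClosed_of_isClosed isClosed_Icc
      (isClosed_Ici (a := δ))) inter_subset_left).exists_isLeast
      ⟨w, ⟨hw.1.le, hw.2.le.trans hu.2⟩, hcon⟩
  have hTδ : δ ≤ d s (β a) (β T) := hTδ
  refine (hTδ.trans (hsub T hT fun v hv => hδ _ ?_)).not_gt hsmall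
  by_contra! hcv
  exact (hTmin ⟨⟨hv.1.le, hv.2.le.trans hT.2⟩, hcv⟩).not_gt hv.2

end FutureCausal

/-! ### The time separation function along a causal curve -/

theorem timeSep_le {X : Type*} {I : Set ℝ} {d : ℝ → X → X → ℝ} {h : ℝ → X → ℝ} {p q : ℝ × X}
    {l : ℝ} (H : ∀ a b α β, FutureCausal I d h α β a b → α a = p.1 → β a = p.2 → α b = q.1 →
      β b = q.2 → lorLen d h α β a b ≤ l) : timeSep I d h p q ≤ ENNReal.ofReal l := by
  refine sSup_le ?_
  rintro _ ⟨a, b, α, β, h0, h1, h2, h3, h4, rfl⟩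
  exact ENNReal.ofReal_le_ofReal (H a b α β h0 h1 h2 h3 h4)

namespace FutureCausal

variable {X : Type*} {I : Set ℝ} {d : ℝ → X → X → ℝ} {h : ℝ → X → ℝ} {α : ℝ → ℝ} {β : ℝ → X}
  {a b : ℝ}

theorem le_timeSep (hc : FutureCausal I d h α β a b) :
    ENNReal.ofReal (lorLen d h α β a b) ≤ timeSep I d h (α a, β a) (α b, β b) :=
  le_sSup ⟨a, b, α, β, hc, rfl, rfl, rfl, rfl, rfl⟩

variable [TopologicalSpace X] [LocallyCompactSpace X]

/-- Causal curves between sufficiently close points of a given causal curve stay in a fixed compact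
set and close to the given curve. -/
theorem exists_confinement (hc : FutureCausal I d h α β a b) (hG : IsGenProduct I d h) :
    ∃ K r ω H C, ∃ δ > 0, IsModulus d (Icc (α a) (α b)) K r ω ∧
      (∀ t ∈ Icc a b, h (α t) (β t) ≤ H) ∧
      ∀ t₁ ∈ Icc a b, ∀ t₂ ∈ Icc a b, α t₂ - α t₁ < δ → ∀ c e α' β',
        FutureCausal I d h α' β' c e → α' c = α t₁ → β' c = β t₁ → α' e = α t₂ →
        ∀ u ∈ Icc c e, β' u ∈ K ∧ h (α' u) (β' u) ≤ H ∧
          d (α a) (β t₁) (β' u) ≤ C * (α t₂ - α t₁) := by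
  have ha := left_mem_Icc.2 hc.lt.le
  have hs := hc.mem ha
  set J := Icc (α a) (α b) with hJ
  have hJI : J ⊆ I := hG.ordConnected.out hs (hc.mem (right_mem_Icc.2 hc.lt.le))
  have hsJ : α a ∈ J := left_mem_Icc.2 hc.le
  obtain ⟨K, hK, hKβ⟩ :=
    exists_compact_superset (isCompact_Icc.image_of_continuousOn (hc.continuousOn_snd hG))
  obtain ⟨δ, hδ, hδK⟩ := hG.metric.exists_pos_subset hs
    (isCompact_Icc.image_of_continuousOn (hc.continuousOn_snd hG)) isOpen_interior hKβ
  obtain ⟨r, ω, hω⟩ := hG.condC.exists_isModulus hG.metric hJI isCompact_Icc hK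
  obtain ⟨H, hH⟩ := (isCompact_Icc.prod hK).exists_bound_of_continuousOn
    (hG.cont.mono (prod_mono hJI (subset_univ K)))
  have hH0 : 0 ≤ H := (norm_nonneg _).trans
    (hH (α a, β a) ⟨hsJ, interior_subset (hKβ (mem_image_of_mem β ha))⟩)
  set C := Real.exp (ω (α b - α a)) * H with hC
  have hC0 : 0 ≤ C := mul_nonneg (Real.exp_pos _).le hH0
  refine ⟨K, r, ω, H, C, δ / (C + 1), by positivity, hω, fun t ht => (le_abs_self _).trans
    (hH (α t, β t) ⟨hc.mem_Icc ht, interior_subset (hKβ (mem_image_of_mem β ht))⟩), ?_⟩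
  intro t₁ ht₁ t₂ ht₂ hlt c e α' β' hη h1 h2 h3 u hu
  rw [lt_div_iff₀ (by positivity)] at hlt
  have h4 : C * (α t₂ - α t₁) < δ := by
    have := hη.le
    nlinarith
  have hαJ : ∀ t ∈ Icc c e, α' t ∈ J := by
    intro t ht
    have h5 := hη.mem_Icc ht
    rw [h1, h3] at h5
    exact ⟨(hc.mem_Icc ht₁).1.trans h5.1, h5.2.trans (hc.mem_Icc ht₂).2⟩
  have hball : ∀ y, d (α a) (β' c) y < δ → y ∈ K := fun y hy =>
    interior_subset (hδK _ (mem_image_of_mem β ht₁) y (by rwa [← h2]))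
  have hd := hη.dist_le hG hω hJI (s := α a) (M := α b - α a) (H := H) (δ := δ) hsJ hαJ
    (fun v hv => by rw [abs_sub_comm, abs_of_nonneg (sub_nonneg.2 hv.1)]; linarith [hv.2]) hH0
    (fun v hv x hx => (le_abs_self _).trans (hH (v, x) ⟨hv, hx⟩)) hball
    (by rwa [h1, h3, ← mul_assoc, ← hC]) hu
  rw [h1, h3, ← mul_assoc, ← hC] at hd
  have hK' := hball _ (hd.trans_lt h4)
  exact ⟨hK', (le_abs_self _).trans (hH (α' u, β' u) ⟨hαJ u hu, hK'⟩), by rwa [← h2]⟩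

/-- The time separation of nearby points of a causal curve is asymptotically bounded by the
Lorentzian speed. -/
theorem ae_eventually_timeSep_le (hc : FutureCausal I d h α β a b) (hG : IsGenProduct I d h) :
    ∀ᵐ t : ℝ, t ∈ Ioo a b → ∀ ε > 0, ∀ᶠ p in straddle t,
      timeSep I d h (α p.1, β p.1) (α p.2, β p.2) ≤
        ENNReal.ofReal ((Real.sqrt ((h (α t) (β t)) ^ 2 * (deriv α t) ^ 2 -
          (genSpeed d β (α t) t) ^ 2) + ε) * (p.2 - p.1)) := by
  obtain ⟨K, r, ω, _, C, δ, hδ, hω, -, hconf⟩ := hc.exists_confinement hG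
  have hs := hc.mem (left_mem_Icc.2 hc.lt.le)
  have hJI : Icc (α a) (α b) ⊆ I :=
    hG.ordConnected.out hs (hc.mem (right_mem_Icc.2 hc.lt.le))
  filter_upwards [hc.ae_tendsto_genSpeed hG, hc.ae_hasDerivAt] with t h1 h2 ht ε hε
  have htI := Ioo_subset_Icc_self ht
  obtain ⟨-, h1⟩ := h1 ht
  obtain ⟨-, h2⟩ := h2 ht
  set v := genSpeed d β (α t) t
  obtain ⟨κ, hκ, hκ0⟩ : ∃ κ, Real.sqrt (((h (α t) (β t) + κ) * deriv α t) ^ 2 - v ^ 2) <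
      Real.sqrt ((h (α t) (β t)) ^ 2 * (deriv α t) ^ 2 - v ^ 2) + ε ∧ κ ∈ Ioi (0 : ℝ) := by
    have h3 : Continuous fun κ : ℝ =>
        Real.sqrt (((h (α t) (β t) + κ) * deriv α t) ^ 2 - v ^ 2) := by fun_prop
    have h4 : Real.sqrt (((h (α t) (β t) + 0) * deriv α t) ^ 2 - v ^ 2) <
        Real.sqrt ((h (α t) (β t)) ^ 2 * (deriv α t) ^ 2 - v ^ 2) + ε := by
      rw [add_zero, mul_pow]
      exact lt_add_of_pos_right _ hε
    exact ((((h3.tendsto 0).eventually (gt_mem_nhds h4)).filter_mono nhdsWithin_le_nhds).and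
      (self_mem_nhdsWithin (s := Ioi (0 : ℝ)))).exists
  have hαt : Tendsto α (𝓝 t) (𝓝 (α t)) := h2.continuousAt
  have hα₁ := hαt.comp (tendsto_fst_straddle t)
  have hα₂ := hαt.comp (tendsto_snd_straddle t)
  have hΔ : Tendsto (fun p : ℝ × ℝ => α p.2 - α p.1) (straddle t) (𝓝 0) := by
    simpa using hα₂.sub hα₁
  have hexp : Tendsto (fun p : ℝ × ℝ => (Real.exp (ω (α p.2 - α p.1)))⁻¹) (straddle t) (𝓝 1) := by
    have h3 : ContinuousAt (fun x => (Real.exp (ω x))⁻¹) 0 :=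
      hω.cont.rexp.inv₀ (Real.exp_pos _).ne'
    have h4 := h3.tendsto.comp hΔ
    rwa [hω.zero, Real.exp_zero, inv_one] at h4
  have hlim := (((h2.tendsto_straddle.const_mul (h (α t) (β t) + κ)).pow 2).sub
    ((hexp.mul h1).pow 2)).sqrt
  rw [one_mul] at hlim
  obtain ⟨A, hA, B, hB, hAB⟩ := mem_nhds_prod_iff.1
    ((hG.cont.continuousAt (prod_mem_nhds (hG.isOpen.mem_nhds (hc.mem htI)) univ_mem)).eventually
      (gt_mem_nhds (lt_add_of_pos_right (h (α t) (β t)) hκ0)))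
  obtain ⟨ρ', hρ', hA⟩ := Metric.mem_nhds_iff.1 hA
  obtain ⟨ρ, hρ, hB⟩ := (hG.metric.hasBasis hs (β t)).mem_iff.1 hB
  have hβt : ContinuousAt β t :=
    (hc.continuousOn_snd hG t htI).continuousAt (Icc_mem_nhds ht.1 ht.2)
  have hβ₁ := (hβt.tendsto.comp (tendsto_fst_straddle t)).eventually
    ((hG.metric.hasBasis hs (β t)).mem_of_mem (half_pos hρ))
  have hCΔ : Tendsto (fun p : ℝ × ℝ => C * (α p.2 - α p.1)) (straddle t) (𝓝 0) := by
    simpa using hΔ.const_mul C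
  filter_upwards [eventually_straddle t, eventually_straddle_mem (Icc_mem_nhds ht.1 ht.2),
    hΔ.eventually (gt_mem_nhds hδ), hCΔ.eventually (gt_mem_nhds (half_pos hρ)), hβ₁,
    hα₁.eventually (Metric.ball_mem_nhds _ hρ'), hα₂.eventually (Metric.ball_mem_nhds _ hρ'),
    hlim.eventually (gt_mem_nhds hκ)] with p hp hpI hpδ hpC hpβ hpA₁ hpA₂ hplim
  have hw : 0 < p.2 - p.1 := sub_pos.2 hp.2.2
  refine timeSep_le fun c e α' β' hη e1 e2 e3 e4 => ?_
  simp only at e1 e2 e3 e4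
  have hη' := hconf p.1 hpI.1 p.2 hpI.2 hpδ c e α' β' hη e1 e2 e3
  have hαu : ∀ u ∈ Icc c e, α' u ∈ Icc (α p.1) (α p.2) := fun u hu => by
    rw [← e1, ← e3]; exact hη.mem_Icc hu
  have hH : ∀ u ∈ Ioo c e, h (α' u) (β' u) ≤ h (α t) (β t) + κ := by
    intro u hu
    have hu := Ioo_subset_Icc_self hu
    refine le_of_lt (@hAB (α' u, β' u) ⟨hA ?_, hB ?_⟩)
    · exact (convex_ball (α t) ρ').ordConnected.out hpA₁ hpA₂ (hαu u hu)
    · have h5 := (hG.metric.isPseudoDist hs).tri (β t) (β p.1) (β' u)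
      have h6 : d (α a) (β t) (β p.1) < ρ / 2 := hpβ
      change d (α a) (β t) (β' u) < ρ
      linarith [(hη' u hu).2.2]
  have hsub : ∀ u ∈ Ioo c e, α' u ∈ Icc (α a) (α b) := fun u hu =>
    have hu := hαu u (Ioo_subset_Icc_self hu)
    ⟨(hc.mem_Icc hpI.1).1.trans hu.1, hu.2.trans (hc.mem_Icc hpI.2).2⟩
  have hdist := hη.dist_le_exp_mul_integral hG hω hJI (M := α p.2 - α p.1)
    (hc.mem_Icc hpI.1) hsub (fun u hu => (hη' u (Ioo_subset_Icc_self hu)).1) fun u hu => by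
      have hu := hαu u (Ioo_subset_Icc_self hu)
      rw [abs_sub_comm, abs_of_nonneg (sub_nonneg.2 hu.1)]
      linarith [hu.2]
  rw [e2, e4, ← inv_mul_le_iff₀ (Real.exp_pos _)] at hdist
  have hsq := hη.sq_lorLen_add_sq_le hG hH
  rw [e1, e3] at hsq
  have hdist2 := pow_le_pow_left₀ (mul_nonneg (inv_nonneg.2 (Real.exp_pos _).le)
    ((hG.metric.isPseudoDist (hc.mem hpI.1)).nonneg _ _)) hdist 2
  rw [← div_le_iff₀ hw]
  refine (le_abs_self _).trans ((Real.abs_le_sqrt ?_).trans hplim.le)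
  rw [mul_div_assoc', mul_div_assoc', div_pow, div_pow, div_pow, ← sub_div]
  gcongr
  linarith

end FutureCausal

theorem add_mul_mesh_mem_Icc {a b : ℝ} (hab : a < b) {n k : ℕ} (hk : k ≤ n + 1) :
    a + k * mesh a b n ∈ Icc a b := by
  have h1 := mesh_pos hab n
  refine ⟨le_add_of_nonneg_right (by positivity), ?_⟩
  calc a + k * mesh a b n ≤ a + (n + 1 : ℕ) * mesh a b n := by gcongr
    _ = b := add_mul_mesh a b n

theorem varLength_le_sum_mesh {X : Type*} {I : Set ℝ} {d : ℝ → X → X → ℝ} {h : ℝ → X → ℝ}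
    {α : ℝ → ℝ} {β : ℝ → X} {a b : ℝ} (hab : a < b) (n : ℕ) : varLength I d h α β a b ≤
    ∑ k ∈ Finset.range (n + 1), timeSep I d h
      (α (a + k * mesh a b n), β (a + k * mesh a b n))
      (α (a + (k + 1 : ℕ) * mesh a b n), β (a + (k + 1 : ℕ) * mesh a b n)) := by
  refine sInf_le ⟨n + 1, n.succ_pos, fun k => a + k * mesh a b n, by simp, add_mul_mesh a b n,
    fun k _ => ?_, rfl⟩
  have := mesh_pos hab n
  push_cast
  linarith

namespace FutureCausal

variable {X : Type*} [TopologicalSpace X] {I : Set ℝ} {d : ℝ → X → X → ℝ} {h : ℝ → X → ℝ}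
  {α : ℝ → ℝ} {β : ℝ → X} {a b : ℝ}

theorem lorLen_le (hc : FutureCausal I d h α β a b) (hG : IsGenProduct I d h) {H : ℝ} (hH0 : 0 ≤ H)
    (hH : ∀ t ∈ Ioo a b, h (α t) (β t) ≤ H) : lorLen d h α β a b ≤ H * (α b - α a) := by
  refine (abs_le_of_sq_le_sq' ?_ (mul_nonneg hH0 (sub_nonneg.2 hc.le))).2
  linarith [hc.sq_lorLen_add_sq_le hG hH, sq_nonneg (∫ t in a..b, genSpeed d β (α t) t)]

theorem varLength_le_lorLen [LocallyCompactSpace X] (hc : FutureCausal I d h α β a b)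
    (hG : IsGenProduct I d h) :
    varLength I d h α β a b ≤ ENNReal.ofReal (lorLen d h α β a b) := by
  obtain ⟨_, _, _, H, _, δ, hδ, -, hH, hconf⟩ := hc.exists_confinement hG
  have ha := left_mem_Icc.2 hc.lt.le
  have hH0 : 0 ≤ H := (hG.pos _ (hc.mem ha) (β a)).le.trans (hH a ha)
  let T : ℝ → ℝ → ℝ≥0∞ := fun t u => timeSep I d h (α t, β t) (α u, β u)
  have hT : ∀ᶠ n : ℕ in atTop, ∀ k < n + 1,
      T (a + k * mesh a b n) (a + (k + 1 : ℕ) * mesh a b n) ≤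
        ENNReal.ofReal (H * (α (a + (k + 1 : ℕ) * mesh a b n) - α (a + k * mesh a b n))) := by
    obtain ⟨η, hη, hu⟩ := Metric.uniformContinuousOn_iff.1
      (isCompact_Icc.uniformContinuousOn_of_continuous hc.continuousOn_fst) δ hδ
    filter_upwards [(tendsto_mesh a b).eventually (gt_mem_nhds hη)] with n hn k hk
    have h1 := add_mul_mesh_mem_Icc hc.lt hk.le
    have h2 := add_mul_mesh_mem_Icc hc.lt (Nat.succ_le_of_lt hk)
    have h3 := hu _ h2 _ h1 (by
      rw [Real.dist_eq, abs_of_nonneg] <;> push_cast <;> linarith [mesh_pos hc.lt n])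
    refine timeSep_le fun c e α' β' hη e1 e2 e3 e4 => ?_
    have h4 := hη.lorLen_le hG hH0 fun u hu => (hconf _ h1 _ h2 ((le_abs_self _).trans_lt h3) c e
      α' β' hη e1 e2 e3 u (Ioo_subset_Icc_self hu)).2.1
    rwa [e1, e3] at h4
  have hsum : ∀ᶠ n : ℕ in atTop, ∑ k ∈ Finset.range (n + 1),
      (H * (α (a + (k + 1 : ℕ) * mesh a b n) - α (a + k * mesh a b n)) -
        (T (a + k * mesh a b n) (a + (k + 1 : ℕ) * mesh a b n)).toReal) ≤
      H * (α b - α a) - (varLength I d h α β a b).toReal := by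
    filter_upwards [hT] with n hn
    have hfin : ∀ k ∈ Finset.range (n + 1),
        T (a + k * mesh a b n) (a + (k + 1 : ℕ) * mesh a b n) ≠ ⊤ := fun k hk =>
      ((hn k (Finset.mem_range.1 hk)).trans_lt ENNReal.ofReal_lt_top).ne
    have h1 := ENNReal.toReal_mono (ENNReal.sum_ne_top.2 hfin)
      (varLength_le_sum_mesh (I := I) (d := d) (h := h) (α := α) (β := β) hc.lt n)
    rw [ENNReal.toReal_sum hfin] at h1
    rw [Finset.sum_sub_distrib, ← Finset.mul_sum,
      Finset.sum_range_sub (fun k : ℕ => α (a + k * mesh a b n)), add_mul_mesh]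
    simp only [Nat.cast_zero, zero_mul, add_zero]
    linarith
  have hvar : varLength I d h α β a b ≠ ⊤ := by
    obtain ⟨n, hn⟩ := hT.exists
    refine ((varLength_le_sum_mesh hc.lt n).trans_lt (ENNReal.sum_lt_top.2 fun k hk => ?_)).ne
    exact (hn k (Finset.mem_range.1 hk)).trans_lt ENNReal.ofReal_lt_top
  have hf := hc.intervalIntegrable_lorLen hG
  have hα := hc.intervalIntegrable_deriv.const_mul H
  have key := integral_le_of_sum_le
    (F := fun t u => H * (α u - α t) - (T t u).toReal) hc.lt (hα.sub hf) ?_ ?_ hsum ?_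
  · rw [intervalIntegral.integral_sub hα hf, intervalIntegral.integral_const_mul,
      hc.integral_deriv] at key
    rw [← ENNReal.ofReal_toReal hvar]
    refine ENNReal.ofReal_le_ofReal ?_
    unfold lorLen
    linarith
  · filter_upwards [hc.2.1] with t h1 ht
    have h2 := hH t (Ioo_subset_Icc_self ht)
    have h3 := hG.pos _ (hc.mem (Ioo_subset_Icc_self ht)) (β t)
    rw [sub_nonneg, ← mul_pow]
    refine Real.sqrt_le_iff.2 ⟨mul_nonneg hH0 (h1 ht).le, ?_⟩
    have h4 := pow_le_pow_left₀ (mul_nonneg h3.le (h1 ht).le)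
      (mul_le_mul_of_nonneg_right h2 (h1 ht).le) 2
    linarith [sq_nonneg (genSpeed d β (α t) t)]
  · filter_upwards [hT] with n hn k hk
    refine sub_nonneg.2 (ENNReal.toReal_le_of_le_ofReal (mul_nonneg hH0 (sub_nonneg.2 ?_))
      (hn k hk))
    refine hc.monotoneOn (add_mul_mesh_mem_Icc hc.lt hk.le)
      (add_mul_mesh_mem_Icc hc.lt (Nat.succ_le_of_lt hk)) ?_
    push_cast
    linarith [mesh_pos hc.lt n]
  · filter_upwards [hc.ae_eventually_timeSep_le hG, hc.ae_hasDerivAt] with t h1 h2 ht ε hε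
    have h3 := ((h2 ht).2.tendsto_straddle.const_mul H).eventually
      (lt_mem_nhds (sub_lt_self _ (half_pos hε)))
    filter_upwards [h1 ht (ε / 2) (half_pos hε), h3, eventually_straddle t] with p h4 h5 h6
    have hw : 0 < p.2 - p.1 := sub_pos.2 h6.2.2
    have h7 := ENNReal.toReal_le_of_le_ofReal
      (mul_nonneg (add_nonneg (Real.sqrt_nonneg _) (half_pos hε).le) hw.le) h4
    rw [mul_div_assoc', lt_div_iff₀ hw] at h5
    nlinarith

theorem lorLen_le_varLength (hc : FutureCausal I d h α β a b) (hG : IsGenProduct I d h) :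
    ENNReal.ofReal (lorLen d h α β a b) ≤ varLength I d h α β a b := by
  refine le_sInf ?_
  rintro _ ⟨N, -, t, rfl, rfl, ht, rfl⟩
  have hmono : ∀ i ≤ N, t 0 ≤ t i ∧ t i ≤ t N := by
    have : ∀ i j, i ≤ j → j ≤ N → t i ≤ t j := by
      intro i j hij
      induction j, hij using Nat.le_induction with
      | base => exact fun _ => le_rfl
      | succ j _ ih => exact fun hj => (ih (by omega)).trans (ht j (by omega)).le
    exact fun i hi => ⟨this 0 i i.zero_le hi, this i N hi le_rfl⟩
  have hc' : ∀ i < N, FutureCausal I d h α β (t i) (t (i + 1)) := fun i hi =>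
    hc.mono (hmono i hi.le).1 (ht i hi) (hmono (i + 1) hi).2
  have hlen : lorLen d h α β (t 0) (t N) =
      ∑ i ∈ Finset.range N, lorLen d h α β (t i) (t (i + 1)) :=
    (intervalIntegral.sum_integral_adjacent_intervals fun i hi =>
      (hc' i hi).intervalIntegrable_lorLen hG).symm
  have hnonneg : ∀ i ∈ Finset.range N, 0 ≤ lorLen d h α β (t i) (t (i + 1)) := fun i hi =>
    intervalIntegral.integral_nonneg (ht i (Finset.mem_range.1 hi)).le
      fun _ _ => Real.sqrt_nonneg _
  rw [hlen, ENNReal.ofReal_sum_of_nonneg hnonneg]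
  exact Finset.sum_le_sum fun i hi => (hc' i (Finset.mem_range.1 hi)).le_timeSep

end FutureCausal

/-- **The variational Lorentzian length agrees with the Lorentzian length**
(Proposition 4.8): `L_τ(γ) = τ(γ)` for every causal curve `γ`. -/
theorem varLength_eq_lorLen {X : Type*} [TopologicalSpace X] [LocallyCompactSpace X]
    (I : Set ℝ) (hIopen : IsOpen I) (hIord : I.OrdConnected) (hIne : I.Nonempty)
    (d : ℝ → X → X → ℝ) (hd : IsMetricFamily I d) (hdC : CondC I d)
    (h : ℝ → X → ℝ) (hpos : ∀ s ∈ I, ∀ x : X, 0 < h s x)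
    (hcont : ContinuousOn (fun z : ℝ × X => h z.1 z.2) (I ×ˢ (Set.univ : Set X)))
    (a b : ℝ) (α : ℝ → ℝ) (β : ℝ → X)
    (hcausal : FutureCausal I d h α β a b) :
    varLength I d h α β a b = ENNReal.ofReal (lorLen d h α β a b) := by
  have hG : IsGenProduct I d h := ⟨hIopen, hIord, hd, hdC, hpos, hcont⟩
  exact (hcausal.varLength_le_lorLen hG).antisymm (hcausal.lorLen_le_varLength hG)

end
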